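/- arXiv:1201.2861 — 2 statements merged into one kernel-verified Lean document; each statement's English description precedes it below -/
import Mathlib

section
/- Let f:[0,1]→[0,1] be continuous and piecewise monotone with a unique fixed point a. Let c∈[0,1] satisfy c<a and f(c)>a, suppose f^n(c)≤c for some integer n≥1, and additionally f^{n+1}(c)≤a. Let p be the number of indices i with 0≤i≤n−1 such that f^i(c) and f^{i+1}(c) lie on opposite sides of a. Then for every pair of positive integers (r,s) with r/s=p/(2n), f has a periodic point of over-rotation pair (r,s). -/
open Set Function

/-- The function χ_g: 1/2 where (g(x)−x)(g(g(x))−g(x)) ≤ 0, and 0 otherwise. -/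
noncomputable def chi (g : ℝ → ℝ) (x : ℝ) : ℝ :=
  if (g x - x) * (g (g x) - g x) ≤ 0 then 1 / 2 else 0

/-- Over-rotation number of a periodic point `y` of `g`. -/
noncomputable def overRotNum (g : ℝ → ℝ) (y : ℝ) : ℝ :=
  (∑ i ∈ Finset.range (Function.minimalPeriod g y), chi g (g^[i] y)) /
    (Function.minimalPeriod g y : ℝ)

/-- The over-rotation interval of `g` on the domain `s`: the closure of the set of
over-rotation numbers of periodic non-fixed points of `g` in `s`. -/
def overRotInterval (g : ℝ → ℝ) (s : Set ℝ) : Set ℝ :=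
  closure { r : ℝ | ∃ y ∈ s, y ∈ Function.periodicPts g ∧ g y ≠ y ∧ overRotNum g y = r }

/-- `f` is piecewise monotone on `[a,b]`. -/
def PiecewiseMonotoneOn (f : ℝ → ℝ) (a b : ℝ) : Prop :=
  ∃ n : ℕ, ∃ t : Fin (n + 1) → ℝ, StrictMono t ∧ t 0 = a ∧ t (Fin.last n) = b ∧
    ∀ i : Fin n, MonotoneOn f (Set.Icc (t i.castSucc) (t i.succ)) ∨
      AntitoneOn f (Set.Icc (t i.castSucc) (t i.succ))



/-- A continuous function which attains `p` at `P` and `q` at `Q`, with `P ≤ Q` and `p ≤ q`, maps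
some subinterval into `[p, q]`, its endpoints going to the endpoints in order. -/
theorem exists_Icc_mapsTo_of_le {f : ℝ → ℝ} {P Q p q : ℝ} (hPQ : P ≤ Q)
    (hf : ContinuousOn f (Icc P Q)) (hP : f P = p) (hQ : f Q = q) (hpq : p ≤ q) :
    ∃ α β, P ≤ α ∧ α ≤ β ∧ β ≤ Q ∧ f α = p ∧ f β = q ∧ MapsTo f (Icc α β) (Icc p q) := by
  have hS : IsCompact (Icc P Q ∩ f ⁻¹' {q}) :=
    isCompact_Icc.of_isClosed_subset (hf.preimage_isClosed_of_isClosed isClosed_Icc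
      isClosed_singleton) inter_subset_left
  obtain ⟨β, ⟨hβ, hfβ⟩, hβmin⟩ := hS.exists_isLeast ⟨Q, ⟨hPQ, le_rfl⟩, hQ⟩
  have hf' : ContinuousOn f (Icc P β) := hf.mono (Icc_subset_Icc_right hβ.2)
  have hT : IsCompact (Icc P β ∩ f ⁻¹' {p}) :=
    isCompact_Icc.of_isClosed_subset (hf'.preimage_isClosed_of_isClosed isClosed_Icc
      isClosed_singleton) inter_subset_left
  obtain ⟨α, ⟨hα, hfα⟩, hαmax⟩ := hT.exists_isGreatest ⟨P, ⟨le_rfl, hβ.1⟩, hP⟩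
  simp only [mem_preimage, mem_singleton_iff] at hfβ hfα
  refine ⟨α, β, hα.1, hα.2, hβ.2, hfα, hfβ, fun x hx => ⟨?_, ?_⟩⟩
  · by_contra! h
    obtain ⟨y, hy, hfy⟩ := intermediate_value_Icc hx.2
      (hf'.mono (Icc_subset_Icc_left (hα.1.trans hx.1))) ⟨h.le, by rw [hfβ]; exact hpq⟩
    have hyα : y ≤ α := hαmax ⟨⟨hα.1.trans (hx.1.trans hy.1), hy.2⟩, hfy⟩
    have : x = α := le_antisymm (hy.1.trans hyα) hx.1
    rw [this, hfα] at h
    exact h.false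
  · by_contra! h
    obtain ⟨y, hy, hfy⟩ := intermediate_value_Icc hx.1
      (hf'.mono (Icc_subset_Icc hα.1 hx.2)) ⟨by rw [hfα]; exact hpq, h.le⟩
    have hyβ : β ≤ y := hβmin ⟨⟨hα.1.trans hy.1, (hy.2.trans hx.2).trans hβ.2⟩, hfy⟩
    have : x = β := le_antisymm hx.2 (hyβ.trans hy.2)
    rw [this, hfβ] at h
    exact h.false

theorem exists_Icc_mapsTo_of_subset_image {f : ℝ → ℝ} {l u p q : ℝ}
    (hf : ContinuousOn f (Icc l u)) (hpq : p ≤ q) (hsub : Icc p q ⊆ f '' Icc l u) :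
    ∃ α β, l ≤ α ∧ α ≤ β ∧ β ≤ u ∧ MapsTo f (Icc α β) (Icc p q) ∧
      (f α = p ∧ f β = q ∨ f α = q ∧ f β = p) := by
  obtain ⟨P, hP, hfP⟩ := hsub ⟨le_rfl, hpq⟩
  obtain ⟨Q, hQ, hfQ⟩ := hsub ⟨hpq, le_rfl⟩
  rcases le_total P Q with h | h
  · obtain ⟨α, β, h1, h2, h3, h4, h5, h6⟩ := exists_Icc_mapsTo_of_le h
      (hf.mono (Icc_subset_Icc hP.1 hQ.2)) hfP hfQ hpq
    exact ⟨α, β, hP.1.trans h1, h2, h3.trans hQ.2, h6, Or.inl ⟨h4, h5⟩⟩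
  · obtain ⟨α, β, h1, h2, h3, h4, h5, h6⟩ := exists_Icc_mapsTo_of_le (f := fun x => - f x) h
      (hf.mono (Icc_subset_Icc hQ.1 hP.2)).neg (congrArg Neg.neg hfQ) (congrArg Neg.neg hfP)
      (neg_le_neg hpq)
    refine ⟨α, β, hQ.1.trans h1, h2, h3.trans hP.2, fun x hx => ?_,
      Or.inr ⟨neg_injective h4, neg_injective h5⟩⟩
    have := h6 hx
    exact ⟨neg_le_neg_iff.1 this.2, neg_le_neg_iff.1 this.1⟩

/-- Along a chain of intervals, each covering the next, some subinterval of the first follows the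
chain and is mapped onto the last interval, endpoints to endpoints. -/
theorem exists_Icc_follows_chain {f : ℝ → ℝ} (m : ℕ) :
    ∀ l u : ℕ → ℝ, (∀ i, l i ≤ u i) → (∀ i, ContinuousOn f (Icc (l i) (u i))) →
      (∀ i < m, Icc (l (i + 1)) (u (i + 1)) ⊆ f '' Icc (l i) (u i)) →
      ∃ α β, l 0 ≤ α ∧ α ≤ β ∧ β ≤ u 0 ∧ ContinuousOn f^[m] (Icc α β) ∧
        (∀ i ≤ m, MapsTo f^[i] (Icc α β) (Icc (l i) (u i))) ∧
        (f^[m] α = l m ∧ f^[m] β = u m ∨ f^[m] α = u m ∧ f^[m] β = l m) := by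
  induction m with
  | zero =>
    intro l u hlu _ _
    refine ⟨l 0, u 0, le_rfl, hlu 0, le_rfl, continuousOn_id, fun i hi => ?_, Or.inl ⟨rfl, rfl⟩⟩
    obtain rfl : i = 0 := by omega
    exact fun x hx => hx
  | succ m ih =>
    intro l u hlu hf hcov
    obtain ⟨p, q, hp, hpq, hq, hcont, hmaps, hend⟩ := ih (fun i => l (i + 1)) (fun i => u (i + 1))
      (fun i => hlu _) (fun i => hf _) (fun i hi => hcov (i + 1) (by omega))
    obtain ⟨α, β, hα, hαβ, hβ, hm, he⟩ := exists_Icc_mapsTo_of_subset_image (hf 0) hpq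
      ((Icc_subset_Icc hp hq).trans (hcov 0 (by omega)))
    refine ⟨α, β, hα, hαβ, hβ, ?_, ?_, ?_⟩
    · rw [Function.iterate_succ]
      exact hcont.comp ((hf 0).mono (Icc_subset_Icc hα hβ)) hm
    · rintro (_ | i) hi x hx
      · exact ⟨hα.trans hx.1, hx.2.trans hβ⟩
      · rw [Function.iterate_succ_apply]
        exact hmaps i (by omega) (hm hx)
    · simp only [Function.iterate_succ_apply]
      rcases he with ⟨h1, h2⟩ | ⟨h1, h2⟩ <;> rw [h1, h2] <;> tauto

theorem exists_isFixedPt_iterate_of_chain {f : ℝ → ℝ} (m : ℕ) (u v : ℕ → ℝ)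
    (hf : ∀ i, ContinuousOn f (uIcc (u i) (v i)))
    (hcov : ∀ i < m, uIcc (u (i + 1)) (v (i + 1)) ⊆ f '' uIcc (u i) (v i))
    (hloop : uIcc (u 0) (v 0) ⊆ uIcc (u m) (v m)) :
    ∃ x ∈ uIcc (u 0) (v 0), f^[m] x = x ∧ ∀ i ≤ m, f^[i] x ∈ uIcc (u i) (v i) := by
  obtain ⟨α, β, hα, hαβ, hβ, hcont, hmaps, hend⟩ := exists_Icc_follows_chain m
    (fun i => u i ⊓ v i) (fun i => u i ⊔ v i) (fun i => inf_le_sup) hf hcov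
  have hA : α ∈ uIcc (u m) (v m) := hloop ⟨hα, hαβ.trans hβ⟩
  have hB : β ∈ uIcc (u m) (v m) := hloop ⟨hα.trans hαβ, hβ⟩
  have hg : ContinuousOn (fun x => f^[m] x - x) (uIcc α β) := by
    rw [uIcc_of_le hαβ]
    exact hcont.sub continuousOn_id
  have h0 : (0 : ℝ) ∈ uIcc (f^[m] α - α) (f^[m] β - β) := by
    rw [mem_uIcc]
    rcases hend with ⟨h1, h2⟩ | ⟨h1, h2⟩
    · left
      rw [h1, h2]
      exact ⟨sub_nonpos.2 hA.1, sub_nonneg.2 hB.2⟩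
    · right
      rw [h1, h2]
      exact ⟨sub_nonpos.2 hB.1, sub_nonneg.2 hA.2⟩
  obtain ⟨x, hx, hfx⟩ := intermediate_value_uIcc hg h0
  rw [uIcc_of_le hαβ] at hx
  exact ⟨x, ⟨hα.trans hx.1, hx.2.trans hβ⟩, sub_eq_zero.1 hfx, fun i hi => hmaps i hi hx⟩

/-- An integer sequence with steps at most `1`, periodic and of zero sum along an arithmetic
progression, either vanishes identically or leaves the value `0` at some time. -/
theorem eq_zero_or_exists_leaves_zero {w : ℕ → ℤ} {n d k : ℕ} (hn : 0 < n) (hk : 0 < k)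
    (hstep : ∀ i, |w (i + 1) - w i| ≤ 1) (hper : ∀ i, w (i + n) = w i)
    (hsum : ∑ j ∈ Finset.range k, w (j * d) = 0) :
    (∀ i, w i = 0) ∨ ∃ i, w i = 0 ∧ w (i + 1) ≠ 0 := by
  by_contra! h
  obtain ⟨⟨i₀, hi₀⟩, hstay⟩ := h
  have hnz : ∀ i, w i ≠ 0 := by
    intro i hi
    have h1 : ∀ m, w (i + m) = 0 := fun m => by
      induction m with
      | zero => exact hi
      | succ m ih => exact hstay _ ih
    have h2 : ∀ m, w (i₀ + m * n) = w i₀ := fun m => by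
      induction m with
      | zero => simp
      | succ m ih => rw [Nat.succ_mul, ← add_assoc, hper, ih]
    have h3 : i ≤ i₀ + i * n := by nlinarith
    obtain ⟨m, hm⟩ := Nat.exists_eq_add_of_le h3
    exact hi₀ (by rw [← h2 i, hm, h1])
  have hne : (Finset.range k).Nonempty := ⟨0, Finset.mem_range.2 hk⟩
  rcases lt_or_gt_of_ne (hnz 0) with h | h
  · have hneg : ∀ i, w i < 0 := fun i => by
      induction i with
      | zero => exact h
      | succ i ih =>
        have := abs_le.1 (hstep i)
        have := hnz (i + 1)
        omega
    exact (Finset.sum_neg (fun j _ => hneg (j * d)) hne).ne hsum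
  · have hpos : ∀ i, 0 < w i := fun i => by
      induction i with
      | zero => exact h
      | succ i ih =>
        have := abs_le.1 (hstep i)
        have := hnz (i + 1)
        omega
    exact (Finset.sum_pos (fun j _ => hpos (j * d)) hne).ne' hsum

/-- `1` if `x` and `f x` lie on different sides of `a`, and `0` otherwise. -/
noncomputable def sideChange (f : ℝ → ℝ) (a x : ℝ) : ℕ :=
  if x < a ↔ f x < a then 0 else 1

/-- The number of side changes along the first `N` steps of the orbit of `x`. -/
noncomputable def crossings (f : ℝ → ℝ) (a x : ℝ) (N : ℕ) : ℕ :=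
  ∑ i ∈ Finset.range N, sideChange f a (f^[i] x)

theorem crossings_add (f : ℝ → ℝ) (a x : ℝ) (m n : ℕ) :
    crossings f a x (m + n) = crossings f a x m + crossings f a (f^[m] x) n := by
  simp only [crossings, Finset.sum_range_add, ← Function.iterate_add_apply]
  congr 1
  exact Finset.sum_congr rfl fun i _ => by rw [add_comm]

theorem crossings_mul_of_forall_eq {f : ℝ → ℝ} {a x : ℝ} {N P : ℕ} (j : ℕ)
    (h : ∀ m < j, crossings f a (f^[m * N] x) N = P) : crossings f a x (j * N) = j * P := by
  induction j with
  | zero => simp [crossings]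
  | succ j ih =>
    rw [Nat.succ_mul, crossings_add, ih fun m hm => h m (by omega), h j (by omega)]
    ring

theorem even_crossings_iff {f : ℝ → ℝ} {a x : ℝ} (N : ℕ) :
    Even (crossings f a x N) ↔ (x < a ↔ f^[N] x < a) := by
  induction N with
  | zero => simp [crossings]
  | succ N ih =>
    rw [crossings_add, Nat.even_add, ih, Function.iterate_succ_apply']
    have : Even (crossings f a (f^[N] x) 1) ↔ (f^[N] x < a ↔ f (f^[N] x) < a) := by
      simp only [crossings, Finset.sum_range_one, Function.iterate_zero, id, sideChange]
      split_ifs with h <;> simp [h]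
    rw [this]
    tauto

theorem crossings_congr {f : ℝ → ℝ} {a x y : ℝ} {N : ℕ}
    (h : ∀ i ≤ N, f^[i] x < a ↔ f^[i] y < a) : crossings f a x N = crossings f a y N := by
  refine Finset.sum_congr rfl fun i hi => ?_
  rw [Finset.mem_range] at hi
  simp only [sideChange, ← Function.iterate_succ_apply' f, h i hi.le, h (i + 1) hi]

theorem lt_iff_lt_of_mem_uIcc {a x y : ℝ} (h : x ∈ uIcc y a) (hx : x ≠ a) : x < a ↔ y < a := by
  rw [mem_uIcc] at h
  have := lt_or_gt_of_ne hx
  grind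

theorem mem_uIcc_or_mem_uIcc_of_lt_iff_lt {a x y : ℝ} (hx : x ≠ a) (hy : y ≠ a)
    (h : x < a ↔ y < a) :
    x ∈ uIcc y a ∨ y ∈ uIcc x a := by
  simp only [mem_uIcc]
  have := lt_or_gt_of_ne hx
  have := lt_or_gt_of_ne hy
  grind

theorem mul_nonpos_iff_not_lt_iff_lt {a x y : ℝ} (hx : x ≠ a) (hy : y ≠ a) :
    (x - a) * (y - a) ≤ 0 ↔ ¬(x < a ↔ y < a) := by
  have := lt_or_gt_of_ne hx
  have := lt_or_gt_of_ne hy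
  rw [mul_nonpos_iff]
  grind

theorem mem_uIcc_of_mul_nonpos {a x y : ℝ} (h : (x - a) * (y - a) ≤ 0) : a ∈ uIcc y x := by
  rw [mem_uIcc]
  rw [mul_nonpos_iff] at h
  grind

/-- The first `N` steps of the orbit of `c` avoid `a` and lead to a point beyond `z`, seen from
`a`, where `z` is itself beyond `c`, and `f` maps `c` and `z` to different sides of `a`. -/
structure IsFold (f : ℝ → ℝ) (s : Set ℝ) (a : ℝ) (N : ℕ) (c z : ℝ) : Prop where
  mem_left : c ∈ s
  mem_right : z ∈ s
  between : c ∈ uIcc z a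
  returns : z ∈ uIcc (f^[N] c) a
  opposite : (f c - a) * (f z - a) ≤ 0
  avoids : ∀ i ≤ N, f^[i] c ≠ a

namespace IsFold

variable {f : ℝ → ℝ} {s : Set ℝ} {a c z : ℝ} {N : ℕ}

theorem left_ne (h : IsFold f s a N c z) : c ≠ a := h.avoids 0 (Nat.zero_le _)

theorem right_ne (h : IsFold f s a N c z) : z ≠ a := fun e => h.left_ne (by
  have := h.between
  rwa [e, uIcc_self, mem_singleton_iff] at this)

theorem right_lt_iff (h : IsFold f s a N c z) : z < a ↔ c < a :=
  (lt_iff_lt_of_mem_uIcc h.between h.left_ne).symm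

theorem iterate_lt_iff (h : IsFold f s a N c z) : f^[N] c < a ↔ c < a :=
  (lt_iff_lt_of_mem_uIcc h.returns h.right_ne).symm.trans h.right_lt_iff

/-- A fold is a horseshoe: the intervals between `z` and `c` and between `c` and `a` both cover
their union in `N` steps. This gives the periodic point that visits the first one once. -/
theorem exists_periodic (h : IsFold f s a N c z) (hs : s.OrdConnected) (hf : ContinuousOn f s)
    (hmaps : MapsTo f s s) (ha : a ∈ s) (hfix : f a = a) (hN : 0 < N) {j : ℕ} (hj : 0 < j) :
    ∃ x ∈ uIcc z c, f^[j * N] x = x ∧ (∀ i, f^[i] x ≠ a) ∧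
      (∀ i, f^[i] x < a ↔ f^[i % N] c < a) ∧
      ∀ m, 0 < m → m < j → f^[m * N] x ∈ uIcc a c := by
  classical
  set u : ℕ → ℝ := fun i => if i % N = 0 ∧ (i = 0 ∨ i = j * N) then z else a with hu
  set v : ℕ → ℝ := fun i => f^[i % N] c with hv
  have hvs : ∀ i, v i ∈ s := fun i => hmaps.iterate _ h.mem_left
  have hus : ∀ i, u i ∈ s := fun i => by
    simp only [hu]
    split_ifs
    exacts [h.mem_right, ha]
  have hK : ∀ i, uIcc (u i) (v i) ⊆ s := fun i => hs.uIcc_subset (hus i) (hvs i)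
  have hcov : ∀ i < j * N, uIcc (u (i + 1)) (v (i + 1)) ⊆ f '' uIcc (u i) (v i) := by
    intro i _
    refine Subset.trans ?_ (intermediate_value_uIcc (hf.mono (hK i)))
    have hau : a ∈ uIcc (f (u i)) (f (v i)) := by
      simp only [hu, hv]
      split_ifs with hi
      · rw [hi.1]
        exact mem_uIcc_of_mul_nonpos h.opposite
      · rw [hfix]
        exact left_mem_uIcc
    have hsub : uIcc (f^[i % N + 1] c) a ⊆ uIcc (f (u i)) (f (v i)) := by
      refine uIcc_subset_uIcc ?_ hau
      rw [Function.iterate_succ_apply']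
      exact right_mem_uIcc
    refine Subset.trans ?_ hsub
    have hlt := Nat.mod_lt i hN
    rcases Nat.lt_or_ge (i % N + 1) N with hlt' | hge
    · have hmod : (i + 1) % N = i % N + 1 := by
        rw [Nat.add_mod, Nat.mod_eq_of_lt (by omega : 1 < N), Nat.mod_eq_of_lt hlt']
      simp only [hu, hv, hmod]
      rw [if_neg (by omega), uIcc_comm]
    · have hN' : i % N + 1 = N := by omega
      have hmod : (i + 1) % N = 0 := by
        rw [← Nat.mod_add_mod, hN', Nat.mod_self]
      have hz : uIcc z a ⊆ uIcc (f^[N] c) a := uIcc_subset_uIcc_right h.returns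
      simp only [hv, hmod, hN', Function.iterate_zero, id]
      refine uIcc_subset_uIcc ?_ (hz h.between)
      have hui : u (i + 1) = z ∨ u (i + 1) = a := ite_eq_or_eq _ _ _
      rcases hui with hui | hui <;> rw [hui]
      exacts [h.returns, right_mem_uIcc]
  have huN : u (j * N) = z := by simp [hu]
  have hu0 : u 0 = z := by simp [hu]
  have hvN : v (j * N) = c := by simp [hv]
  have hv0 : v 0 = c := by simp [hv]
  obtain ⟨x, hx, hper, hfol⟩ := exists_isFixedPt_iterate_of_chain (j * N) u v
    (fun i => hf.mono (hK i)) hcov (by rw [hu0, hv0, huN, hvN])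
  rw [hu0, hv0] at hx
  have hJ : z ∈ uIcc c z ∧ x ∈ uIcc z a := ⟨right_mem_uIcc,
    uIcc_subset_uIcc left_mem_uIcc h.between hx⟩
  have hxa : x ≠ a := by
    intro e
    have h1 := h.between
    have h2 := lt_or_gt_of_ne h.left_ne
    have h3 := h.right_lt_iff
    rw [e] at hx
    rw [mem_uIcc] at hx h1
    grind [h.right_ne]
  have hpos : 0 < j * N := Nat.mul_pos hj hN
  have hmodper : ∀ i, f^[i] x = f^[i % (j * N)] x := fun i =>
    (Function.IsPeriodicPt.iterate_mod_apply (f := f) hper i).symm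
  have hne : ∀ i, f^[i] x ≠ a := by
    intro i hi
    have hm := (Nat.mod_lt i hpos).le
    rw [hmodper] at hi
    have h1 : f^[(j * N - i % (j * N)) + i % (j * N)] x = a := by
      rw [Function.iterate_add_apply, hi]
      exact Function.iterate_fixed hfix _
    rw [Nat.sub_add_cancel hm, hper] at h1
    exact hxa h1
  refine ⟨x, hx, hper, hne, fun i => ?_, fun m hm hmj => ?_⟩
  · rw [hmodper, ← Nat.mod_mul_left_mod i j N]
    have hlt := (Nat.mod_lt i hpos)
    have hi := hne (i % (j * N))
    generalize i % (j * N) = r at *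
    have h1 := hfol r hlt.le
    rcases Nat.eq_zero_or_pos r with rfl | hr
    · exact (lt_iff_lt_of_mem_uIcc hJ.2 hxa).trans (by simpa using h.right_lt_iff)
    · have : u r = a := by
        simp only [hu]
        rw [if_neg (by omega)]
      rw [this, uIcc_comm] at h1
      exact lt_iff_lt_of_mem_uIcc h1 hi
  · have h1 := hfol (m * N) (Nat.mul_le_mul_right _ hmj.le)
    have h2 : u (m * N) = a := by
      simp only [hu]
      rw [if_neg]
      rintro ⟨-, h3 | h3⟩
      · exact (Nat.mul_pos hm hN).ne' h3
      · exact hmj.ne (Nat.eq_of_mul_eq_mul_right hN h3)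
    have h3 : v (m * N) = c := by simp [hv]
    rwa [h2, h3] at h1

end IsFold

/-- Descent from a fold of length `k * d` to one of length `d` with the same frequency of side
changes. -/
theorem IsFold.exists_base {f : ℝ → ℝ} {s : Set ℝ} {a : ℝ} (hs : s.OrdConnected)
    (hf : ContinuousOn f s) (hmaps : MapsTo f s s) (ha : a ∈ s) (hfix : f a = a) {d q : ℕ}
    (hd : 0 < d) (k : ℕ) (hk : 0 < k) :
    ∀ c z, IsFold f s a (k * d) c z → crossings f a c (k * d) = k * (2 * q) →
      ∃ c z, IsFold f s a d c z ∧ crossings f a c d = 2 * q := by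
  induction k using Nat.strong_induction_on with
  | _ k ih =>
  intro c z h hcr
  have hn : 0 < k * d := Nat.mul_pos hk hd
  obtain ⟨x, hx, hper, hne, hside, -⟩ := h.exists_periodic hs hf hmaps ha hfix hn one_pos
  rw [one_mul] at hper
  have hxs : x ∈ s := hs.uIcc_subset h.mem_right h.mem_left hx
  have hside' : ∀ i ≤ k * d, f^[i] x < a ↔ f^[i] c < a := by
    intro i hi
    rcases hi.lt_or_eq with hi | rfl
    · rw [hside, Nat.mod_eq_of_lt hi]
    · rw [hside, Nat.mod_self, h.iterate_lt_iff, Function.iterate_zero, id]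
  have hcrx : crossings f a x (k * d) = k * (2 * q) := by rw [crossings_congr hside', hcr]
  have hsucc : ∀ y, crossings f a y (d + 1) = crossings f a y 1 + crossings f a (f y) d ∧
      crossings f a y (d + 1) = crossings f a y d + crossings f a (f^[d] y) 1 := fun y =>
    ⟨by rw [add_comm, crossings_add, Function.iterate_one], crossings_add ..⟩
  have hone : ∀ y, crossings f a y 1 ≤ 1 := fun y => by
    simp only [crossings, Finset.sum_range_one, sideChange]
    split_ifs <;> simp
  set w : ℕ → ℤ := fun i => (crossings f a (f^[i] x) d : ℤ) - 2 * q with hw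
  have hsum : ∑ j ∈ Finset.range k, w (j * d) = 0 := by
    have h1 : ∀ j, crossings f a x (j * d) = ∑ m ∈ Finset.range j,
        crossings f a (f^[m * d] x) d := fun j => by
      induction j with
      | zero => simp [crossings]
      | succ j ih => rw [Nat.succ_mul, crossings_add, ih, Finset.sum_range_succ]
    have h2 := h1 k
    rw [hcrx] at h2
    simp only [hw, Finset.sum_sub_distrib, ← Nat.cast_sum, ← h2]
    simp
  have hwper : ∀ i, w (i + k * d) = w i := fun i => by
    simp only [hw, Function.iterate_add_apply, hper]
  have hstep : ∀ i, |w (i + 1) - w i| ≤ 1 := fun i => by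
    obtain ⟨h1, h2⟩ := hsucc (f^[i] x)
    have h3 := hone (f^[i] x)
    have h4 := hone (f^[d] (f^[i] x))
    simp only [hw, Function.iterate_succ_apply', abs_le]
    omega
  have hsideq : ∀ i, w i = 0 → (f^[i + d] x < a ↔ f^[i] x < a) := fun i hi => by
    have h1 : crossings f a (f^[i] x) d = 2 * q := by
      simp only [hw] at hi
      omega
    have h2 := (even_crossings_iff (f := f) (a := a) (x := f^[i] x) d).1 (by simp [h1])
    rw [← Function.iterate_add_apply, add_comm d] at h2
    exact h2.symm
  rcases eq_zero_or_exists_leaves_zero hn hk hstep hwper hsum with hzero | ⟨i, hi, hi1⟩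
  · have hsidem : ∀ i m, f^[m * d + i] x < a ↔ f^[i] x < a := fun i m => by
      induction m with
      | zero => simp
      | succ m ih =>
        rw [← ih, ← hsideq _ (hzero (m * d + i)), Nat.succ_mul, add_right_comm]
    have hcside : ∀ i m, m * d + i ≤ k * d → (f^[m * d + i] c < a ↔ f^[i] c < a) :=
      fun i m hle => by
        rw [← hside' _ hle, ← hside' _ (by omega), hsidem]
    have hmk : ∀ m, m < k → m * d + d ≤ k * d := fun m hm => by
      rw [← Nat.succ_mul]
      exact Nat.mul_le_mul_right _ hm
    obtain ⟨m, hm, hm1, hm2⟩ : ∃ m < k, f^[m * d] c ∈ uIcc z a ∧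
        z ∈ uIcc (f^[m * d + d] c) a := by
      by_contra! hcon
      have hall : ∀ m < k, f^[m * d] c ∈ uIcc z a := fun m => by
        induction m with
        | zero => intro _; simpa using h.between
        | succ m ihm =>
          intro hm
          have hle := hmk m (by omega)
          have h1 := hcon m (by omega) (ihm (by omega))
          rw [Nat.succ_mul]
          refine (mem_uIcc_or_mem_uIcc_of_lt_iff_lt (h.avoids _ hle) h.right_ne ?_).resolve_right h1
          rw [← Nat.succ_mul, ← add_zero ((m + 1) * d), hcside 0 (m + 1) (by rw [Nat.succ_mul]; omega),
            h.right_lt_iff]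
          rfl
      refine hcon (k - 1) (by omega) (hall _ (by omega)) ?_
      rw [← Nat.succ_mul, Nat.succ_eq_add_one, Nat.sub_add_cancel hk]
      exact h.returns
    have hle := hmk m hm
    refine ⟨f^[m * d] c, z, ⟨hmaps.iterate _ h.mem_left, h.mem_right, hm1, ?_, ?_, ?_⟩, ?_⟩
    · rwa [← Function.iterate_add_apply, add_comm]
    · have hfc : f c ≠ a := h.avoids 1 (by omega)
      have hfm : f (f^[m * d] c) ≠ a := by
        rw [← Function.iterate_succ_apply' f]
        exact h.avoids _ (by omega)
      have h1 : f (f^[m * d] c) < a ↔ f c < a := by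
        rw [← Function.iterate_succ_apply' f]
        exact hcside 1 m (by omega)
      have h2 := h.opposite
      have h3 := lt_or_gt_of_ne hfc
      have h4 := lt_or_gt_of_ne hfm
      rw [mul_nonpos_iff] at h2 ⊢
      grind
    · intro i hi
      rw [← Function.iterate_add_apply]
      exact h.avoids _ (by omega)
    · have h1 : crossings f a (f^[m * d] c) d = crossings f a (f^[m * d] x) d := by
        refine crossings_congr fun i hi => ?_
        rw [← Function.iterate_add_apply, ← Function.iterate_add_apply, hside' _ (by omega)]
      have h2 := hzero (m * d)
      simp only [hw] at h2
      omega
  · have hk2 : 2 ≤ k := by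
      by_contra hk2
      obtain rfl : k = 1 := by omega
      have h1 : ∀ i, crossings f a (f^[i] x) d = 2 * q := fun i => by
        induction i with
        | zero => simpa using hcrx
        | succ i ihi =>
          obtain ⟨h1, h2⟩ := hsucc (f^[i] x)
          rw [one_mul] at hper
          have h3 : f^[d] (f^[i] x) = f^[i] x := by
            rw [← Function.iterate_add_apply, add_comm, Function.iterate_add_apply, hper]
          rw [h3] at h2
          rw [Function.iterate_succ_apply']
          omega
      refine hi1 ?_
      simp [hw, h1]
    have hid : crossings f a (f^[i] x) d = 2 * q := by
      simp only [hw] at hi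
      omega
    have hopp : (f (f^[i] x) - a) * (f (f^[i + d] x) - a) ≤ 0 := by
      rw [← Function.iterate_succ_apply' f, ← Function.iterate_succ_apply' f,
        mul_nonpos_iff_not_lt_iff_lt (hne _) (hne _)]
      intro hsame
      refine hi1 ?_
      obtain ⟨h1, h2⟩ := hsucc (f^[i] x)
      have h3 : crossings f a (f^[i] x) 1 = crossings f a (f^[d] (f^[i] x)) 1 := by
        have h4 := hsideq i hi
        have h5 : f^[d] (f^[i] x) = f^[i + d] x := by rw [← Function.iterate_add_apply, add_comm]
        refine crossings_congr fun j hj => ?_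
        rw [h5]
        interval_cases j
        · exact h4.symm
        · rw [Function.iterate_one, ← Function.iterate_succ_apply' f,
            ← Function.iterate_succ_apply' f]
          exact hsame
      simp only [hw, Function.iterate_succ_apply']
      omega
    have hmem : ∀ i, f^[i] x ∈ s := fun i => hmaps.iterate _ hxs
    rcases mem_uIcc_or_mem_uIcc_of_lt_iff_lt (hne i) (hne (i + d)) (hsideq i hi).symm with hb | hb
    · refine ⟨f^[i] x, f^[i + d] x, ⟨hmem _, hmem _, hb, ?_, hopp, fun j _ => ?_⟩, hid⟩
      · rw [← Function.iterate_add_apply, add_comm]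
        exact left_mem_uIcc
      · rw [← Function.iterate_add_apply]
        exact hne _
    · have hkd : (k - 1) * d + d = k * d := by
        rw [← Nat.succ_mul, Nat.succ_eq_add_one, Nat.sub_add_cancel hk]
      have hret : f^[(k - 1) * d + d] (f^[i] x) = f^[i] x := by
        rw [hkd, ← Function.iterate_add_apply, add_comm, Function.iterate_add_apply, hper]
      refine ih (k - 1) (by omega) (by omega) (f^[i + d] x) (f^[i] x)
        ⟨hmem _, hmem _, hb, ?_, by rwa [mul_comm], fun j _ => ?_⟩ ?_
      · rw [add_comm, Function.iterate_add_apply f d, ← Function.iterate_add_apply f _ d, hret]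
        exact left_mem_uIcc
      · rw [← Function.iterate_add_apply]
        exact hne _
      · have h1 : crossings f a (f^[i] x) (k * d) = k * (2 * q) := by
          have h2 := crossings_add f a x i (k * d)
          rw [add_comm i, crossings_add, hper, hcrx] at h2
          omega
        rw [← hkd, add_comm, crossings_add, hid, ← Function.iterate_add_apply, add_comm d] at h1
        obtain ⟨l, rfl⟩ : ∃ l, k = l + 1 := ⟨k - 1, by omega⟩
        rw [Nat.add_sub_cancel] at h1 ⊢
        have h2 := add_one_mul l (2 * q)
        omega

/-- A fold of length `d` with `2 * q` side changes, `q` coprime to `d`, gives periodic points of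
every period `j * d`, with the same frequency of side changes. -/
theorem IsFold.exists_minimalPeriod_eq {f : ℝ → ℝ} {s : Set ℝ} {a c z : ℝ} {d q : ℕ}
    (h : IsFold f s a d c z) (hs : s.OrdConnected) (hf : ContinuousOn f s) (hmaps : MapsTo f s s)
    (ha : a ∈ s) (hfix : f a = a) (hd : 0 < d) (hcr : crossings f a c d = 2 * q)
    (hq : Nat.Coprime q d) {j : ℕ} (hj : 0 < j) :
    ∃ x ∈ s, x ∈ Function.periodicPts f ∧ (∀ i, f^[i] x ≠ a) ∧
      Function.minimalPeriod f x = j * d ∧ crossings f a x (j * d) = j * (2 * q) := by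
  obtain ⟨x, hx, hper, hne, hside, hnear⟩ := h.exists_periodic hs hf hmaps ha hfix hd hj
  have hpos : 0 < j * d := Nat.mul_pos hj hd
  have hcount : crossings f a x (j * d) = j * (2 * q) := by
    refine crossings_mul_of_forall_eq j fun m _ => ?_
    rw [← hcr]
    refine crossings_congr fun i hi => ?_
    rw [← Function.iterate_add_apply, hside, Nat.add_mul_mod_self_right]
    rcases hi.lt_or_eq with hi | rfl
    · rw [Nat.mod_eq_of_lt hi]
    · rw [Nat.mod_self, h.iterate_lt_iff, Function.iterate_zero, id]
  refine ⟨x, hs.uIcc_subset h.mem_right h.mem_left hx, ⟨j * d, hpos, hper⟩, hne, ?_, hcount⟩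
  set e := Function.minimalPeriod f x with he
  have hex : f^[e] x = x := Function.iterate_minimalPeriod
  obtain ⟨g, hg⟩ : e ∣ j * d := Function.IsPeriodicPt.minimalPeriod_dvd hper
  obtain ⟨D, hD⟩ : Even (crossings f a x e) := by rw [even_crossings_iff, hex]
  have hDg : crossings f a x (g * e) = g * (D + D) :=
    crossings_mul_of_forall_eq g fun m _ => by
      rw [mul_comm, Function.iterate_mul, Function.iterate_fixed hex, hD]
  rw [mul_comm, ← hg, hcount] at hDg
  have hdvd : d ∣ e := by
    have hDd : D * d = q * e := by
      refine Nat.eq_of_mul_eq_mul_left hj ?_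
      calc j * (D * d) = D * (j * d) := by ring
        _ = g * D * e := by rw [hg]; ring
        _ = j * q * e := by rw [show g * D = j * q by linarith]
        _ = j * (q * e) := by ring
    exact hq.symm.dvd_of_dvd_mul_left ⟨D, by rw [← hDd, mul_comm]⟩
  obtain ⟨m, hm⟩ := hdvd
  rw [mul_comm] at hm
  have hle : e ≤ j * d := Nat.le_of_dvd hpos ⟨g, hg⟩
  have hmj : m ≤ j := Nat.le_of_mul_le_mul_right (hm ▸ hle) hd
  rcases hmj.eq_or_lt with rfl | hlt
  · exact hm
  have hm0 : 0 < m := by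
    have : 0 < e := Function.minimalPeriod_pos_of_mem_periodicPts ⟨j * d, hpos, hper⟩
    rw [hm] at this
    exact Nat.pos_of_mul_pos_right this
  exfalso
  have h1 := hnear m hm0 hlt
  have h2 := hnear 1 one_pos (by omega)
  have h3 := h.between
  have h4 := h.returns
  rw [← hm, hex] at h1
  have hxc : x = c := by
    rw [mem_uIcc] at h1 hx h3
    grind
  rw [one_mul, hxc] at h2
  have hzc : z = c := by
    rw [mem_uIcc] at h2 h3 h4
    grind
  have h5 := h.opposite
  rw [hzc] at h5
  exact h.avoids 1 hd (sub_eq_zero.1 (mul_self_eq_zero.1 (le_antisymm h5 (mul_self_nonneg _))))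

/-- A self-map of `[l, u]` with `a` as its only fixed point moves every other point towards the
side of `a`. -/
theorem lt_apply_and_apply_lt_of_unique_fixedPt {f : ℝ → ℝ} {l u a : ℝ}
    (hf : ContinuousOn f (Icc l u)) (hmaps : MapsTo f (Icc l u) (Icc l u))
    (huniq : ∀ x ∈ Icc l u, f x = x → x = a) {x : ℝ} (hx : x ∈ Icc l u) :
    (x < a → x < f x) ∧ (a < x → f x < x) := by
  have hlu : l ≤ u := hx.1.trans hx.2
  constructor
  · intro hxa
    by_contra! hle
    obtain ⟨y, hy, hfy⟩ := intermediate_value_Icc' hx.1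
      ((hf.sub continuousOn_id).mono (Icc_subset_Icc_right hx.2))
      (show (0 : ℝ) ∈ Icc (f x - x) (f l - l) from
        ⟨sub_nonpos.2 hle, sub_nonneg.2 (hmaps ⟨le_rfl, hlu⟩).1⟩)
    have := huniq y ⟨hy.1, hy.2.trans hx.2⟩ (sub_eq_zero.1 hfy)
    linarith [hy.2]
  · intro hax
    by_contra! hle
    obtain ⟨y, hy, hfy⟩ := intermediate_value_Icc' hx.2
      ((hf.sub continuousOn_id).mono (Icc_subset_Icc_left hx.1))
      (show (0 : ℝ) ∈ Icc (f u - u) (f x - x) from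
        ⟨sub_nonpos.2 (hmaps ⟨hlu, le_rfl⟩).2, sub_nonneg.2 hle⟩)
    have := huniq y ⟨hx.1.trans hy.1, hy.2⟩ (sub_eq_zero.1 hfy)
    linarith [hy.1]

theorem chi_eq_sideChange_div_two {f : ℝ → ℝ} {a x : ℝ}
    (hx : (x < a → x < f x) ∧ (a < x → f x < x))
    (hfx : (f x < a → f x < f (f x)) ∧ (a < f x → f (f x) < f x)) (hxa : x ≠ a) (hfxa : f x ≠ a) :
    chi f x = (sideChange f a x : ℝ) / 2 := by
  have h : (f x - x) * (f (f x) - f x) ≤ 0 ↔ ¬(x < a ↔ f x < a) := by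
    have h1 := lt_or_gt_of_ne hxa
    have h2 := lt_or_gt_of_ne hfxa
    rw [mul_nonpos_iff]
    grind
  simp only [chi, sideChange, h]
  split_ifs <;> simp_all

theorem stmt1 (f : ℝ → ℝ) (a c : ℝ) (n : ℕ)
    (hf : ContinuousOn f (Set.Icc 0 1))
    (hmaps : Set.MapsTo f (Set.Icc 0 1) (Set.Icc 0 1))
    (hpm : PiecewiseMonotoneOn f 0 1)
    (ha : a ∈ Set.Icc (0:ℝ) 1) (hfix : f a = a)
    (huniq : ∀ x ∈ Set.Icc (0:ℝ) 1, f x = x → x = a)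
    (hc : c ∈ Set.Icc (0:ℝ) 1) (hca : c < a) (hfc : a < f c)
    (hn : 1 ≤ n) (hfn : f^[n] c ≤ c) (hfn1 : f^[n+1] c ≤ a)
    (p : ℕ)
    (hp : p = ((Finset.range n).filter (fun i =>
        (f^[i] c < a ∧ a < f^[i+1] c) ∨ (a < f^[i] c ∧ f^[i+1] c < a))).card) :
    ∀ r s : ℕ, 0 < r → 0 < s → (r : ℝ) / s = (p : ℝ) / (2 * n) →
      ∃ y ∈ Set.Icc (0:ℝ) 1, y ∈ Function.periodicPts f ∧ f y ≠ y ∧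
        Function.minimalPeriod f y = s ∧ overRotNum f y = (r : ℝ) / s := by
  intro r s hr hs hrs
  have hoc : (Icc (0 : ℝ) 1).OrdConnected := ordConnected_Icc
  have havoid : ∀ i ≤ n, f^[i] c ≠ a := by
    intro i hi h
    have h1 : f^[(n - i) + i] c = a := by
      rw [Function.iterate_add_apply, h]
      exact Function.iterate_fixed hfix _
    rw [Nat.sub_add_cancel hi] at h1
    linarith
  have hfold : IsFold f (Icc 0 1) a n c (f^[n] c) :=
    ⟨hc, hmaps.iterate n hc, mem_uIcc.2 (Or.inl ⟨hfn, hca.le⟩), left_mem_uIcc,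
      mul_nonpos_of_nonneg_of_nonpos (sub_nonneg.2 hfc.le)
        (sub_nonpos.2 (by rwa [← Function.iterate_succ_apply' f])), havoid⟩
  have hpc : crossings f a c n = p := by
    rw [hp, Finset.card_filter]
    refine Finset.sum_congr rfl fun i hi => ?_
    rw [Finset.mem_range] at hi
    have h1 := lt_or_gt_of_ne (havoid i hi.le)
    have h2 := lt_or_gt_of_ne (havoid (i + 1) hi)
    rw [Function.iterate_succ_apply'] at h2 ⊢
    simp only [sideChange]
    grind
  obtain ⟨q', hq'⟩ : Even p := by
    rw [← hpc, even_crossings_iff]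
    exact hfold.iterate_lt_iff.symm
  have hkpos : 0 < Nat.gcd q' n := Nat.gcd_pos_of_pos_right _ hn
  obtain ⟨q, d, hcop, hqk, hdk⟩ := Nat.exists_coprime q' n
  set k := Nat.gcd q' n
  have hd : 0 < d := by
    rcases Nat.eq_zero_or_pos d with h | h
    · rw [h, zero_mul] at hdk
      omega
    · exact h
  rw [mul_comm] at hdk
  have hr' : r * d = q * s := by
    have h1 : (0 : ℝ) < s := by exact_mod_cast hs
    have h2 : (0 : ℝ) < d := by exact_mod_cast hd
    have h3 : (0 : ℝ) < k := by exact_mod_cast hkpos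
    rw [hq', hqk, hdk] at hrs
    push_cast at hrs
    field_simp at hrs
    have h4 : (r : ℝ) * d = q * s := by linarith
    exact_mod_cast h4
  obtain ⟨j, hj⟩ : d ∣ s := hcop.symm.dvd_of_dvd_mul_left ⟨r, by rw [← hr', mul_comm]⟩
  rw [mul_comm] at hj
  have hj0 : 0 < j := Nat.pos_of_ne_zero fun h => by simp [h] at hj; omega
  have hrj : r = j * q := Nat.eq_of_mul_eq_mul_right hd (by rw [hr', hj]; ring)
  rw [hdk] at hfold hpc
  obtain ⟨c', z', hfold', hcr'⟩ := IsFold.exists_base hoc hf hmaps ha hfix hd k hkpos c _ hfold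
    (q := q) (by rw [hpc, hq', hqk]; ring)
  obtain ⟨y, hy, hyper, hya, hmin, hcount⟩ :=
    hfold'.exists_minimalPeriod_eq hoc hf hmaps ha hfix hd hcr' hcop hj0
  rw [← hj] at hmin hcount
  refine ⟨y, hy, hyper, fun h => hya 0 (huniq y hy h), hmin, ?_⟩
  have hmove : ∀ i, (f^[i] y < a → f^[i] y < f (f^[i] y)) ∧ (a < f^[i] y → f (f^[i] y) < f^[i] y) :=
    fun i => lt_apply_and_apply_lt_of_unique_fixedPt hf hmaps huniq (hmaps.iterate i hy)
  have hchi : ∑ i ∈ Finset.range s, chi f (f^[i] y) = (crossings f a y s : ℝ) / 2 := by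
    rw [crossings, Nat.cast_sum, Finset.sum_div]
    refine Finset.sum_congr rfl fun i _ => ?_
    have h1 := hmove (i + 1)
    have h2 := hya (i + 1)
    rw [Function.iterate_succ_apply'] at h1 h2
    exact chi_eq_sideChange_div_two (hmove i) h1 (hya i) h2
  rw [overRotNum, hmin, hchi, hcount, hrj]
  push_cast
  congr 1
  ring
end

section
/- Let I⊆J be compact real intervals, let g:I→I and f:J→J be continuous piecewise-monotone maps, let a be the unique fixed point of g in I and the unique fixed point of f in J, and suppose a is not a local extremum of g. For x∈I let ψ_g(x) denote the point of the closed interval with endpoints x and a that is closest to a and satisfies g(ψ_g(x))=g(x), and set B=ψ_g(I). If for every x∈B the closed interval with endpoints f(x) and a contains the closed interval with endpoints g(x) and a (f is more repellent from a than g on B), then I_f ⊇ I_g; in particular, if g has a periodic point of odd minimal period greater than 1, then the set of minimal periods of periodic points of f contains the set of minimal periods of periodic points of g. -/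
open Set Function

lemma abs_sub_lt_of_mem_uIcc {u v w y : ℝ} (hy : y ∈ uIcc u w) (hw : w ∈ uIcc u v) (hwv : w ≠ v) :
    |u - y| < |u - v| := by
  rw [mem_uIcc] at hy hw
  grind

/-- A covering of `[u', v']` by `f` on `[b, c]` restricts to a subinterval which is mapped into
`[u', v']`, endpoints going to endpoints. -/
lemma exists_uIcc_subset_mapsTo {f : ℝ → ℝ} {b c u' v' : ℝ} (hf : ContinuousOn f (uIcc b c))
    (hcov : uIcc u' v' ⊆ f '' uIcc b c) :
    ∃ u v, uIcc u v ⊆ uIcc b c ∧ f u = u' ∧ f v = v' ∧ MapsTo f (uIcc u v) (uIcc u' v') := by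
  have hcl : ∀ e : ℝ, IsCompact {x ∈ uIcc b c | f x = e} := fun e =>
    isCompact_uIcc.of_isClosed_subset
      (hf.preimage_isClosed_of_isClosed isClosed_Icc isClosed_singleton) fun x hx => hx.1
  obtain ⟨s, hs⟩ := hcov left_mem_uIcc
  obtain ⟨t, ht⟩ := hcov right_mem_uIcc
  obtain ⟨⟨u, v⟩, ⟨hu, hv⟩, hmin⟩ := ((hcl u').prod (hcl v')).exists_isMinOn ⟨(s, t), hs, ht⟩
    (f := fun q : ℝ × ℝ => |q.1 - q.2|) (by fun_prop)
  have hsub : uIcc u v ⊆ uIcc b c := uIcc_subset_uIcc hu.1 hv.1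
  refine ⟨u, v, hsub, hu.2, hv.2, fun w hw => ?_⟩
  by_contra hcon
  have hlt : ∀ x ∈ uIcc b c, ∀ y ∈ uIcc b c, f x = u' → f y = v' → |u - v| ≤ |x - y| :=
    fun x hx y hy h1 h2 => hmin (a := (x, y)) ⟨⟨hx, h1⟩, ⟨hy, h2⟩⟩
  have hwu : w ≠ u := by rintro rfl; exact hcon (hu.2 ▸ left_mem_uIcc)
  have hwv : w ≠ v := by rintro rfl; exact hcon (hv.2 ▸ right_mem_uIcc)
  have hcase : v' ∈ uIcc (f u) (f w) ∨ u' ∈ uIcc (f w) (f v) := by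
    rw [hu.2, hv.2]
    simp only [mem_uIcc] at hcon ⊢
    grind
  rcases hcase with h | h
  · have hsub' : uIcc u w ⊆ uIcc u v := uIcc_subset_uIcc left_mem_uIcc hw
    obtain ⟨y, hy, hfy⟩ := intermediate_value_uIcc (hf.mono (hsub'.trans hsub)) h
    exact (hlt u hu.1 y (hsub (hsub' hy)) hu.2 hfy).not_gt (abs_sub_lt_of_mem_uIcc hy hw hwv)
  · have hsub' : uIcc w v ⊆ uIcc u v := uIcc_subset_uIcc hw right_mem_uIcc
    obtain ⟨y, hy, hfy⟩ := intermediate_value_uIcc (hf.mono (hsub'.trans hsub)) h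
    have := hlt y (hsub (hsub' hy)) v hv.1 hfy hv.2
    rw [abs_sub_comm u, abs_sub_comm y] at this
    exact this.not_gt (abs_sub_lt_of_mem_uIcc (uIcc_comm w v ▸ hy) (uIcc_comm u v ▸ hw) hwu)

lemma exists_uIcc_iterate_mapsTo {f : ℝ → ℝ} {s : Set ℝ} [s.OrdConnected]
    (hf : ContinuousOn f s) (n : ℕ) (b c : ℕ → ℝ) (hb : ∀ i ≤ n, b i ∈ s) (hc : ∀ i ≤ n, c i ∈ s)
    (hcov : ∀ i < n, uIcc (b (i + 1)) (c (i + 1)) ⊆ f '' uIcc (b i) (c i)) :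
    ∃ u v, f^[n] u = b n ∧ f^[n] v = c n ∧
      ∀ i ≤ n, MapsTo f^[i] (uIcc u v) (uIcc (b i) (c i)) := by
  induction n generalizing b c with
  | zero => exact ⟨b 0, c 0, rfl, rfl, fun i hi w hw => by simpa [Nat.le_zero.1 hi] using hw⟩
  | succ n ih =>
    obtain ⟨u', v', hu', hv', hm'⟩ := ih (fun i => b (i + 1)) (fun i => c (i + 1))
      (fun i hi => hb _ (by omega)) (fun i hi => hc _ (by omega)) fun i hi => hcov _ (by omega)
    have h1 : uIcc u' v' ⊆ f '' uIcc (b 0) (c 0) :=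
      (show uIcc u' v' ⊆ uIcc (b 1) (c 1) from hm' 0 (Nat.zero_le _)).trans (hcov 0 (by omega))
    obtain ⟨u, v, hsub, hu, hv, hm⟩ := exists_uIcc_subset_mapsTo
      (hf.mono (OrdConnected.uIcc_subset ‹_› (hb 0 (by omega)) (hc 0 (by omega)))) h1
    refine ⟨u, v, by rw [iterate_succ_apply, hu, hu'], by rw [iterate_succ_apply, hv, hv'], ?_⟩
    rintro (_ | i) hi w hw
    · exact hsub hw
    · exact hm' i (by omega) (hm hw)

/-- A loop of intervals, each covering the next one, contains a periodic orbit. -/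
lemma exists_iterate_eq_self_of_covers {f : ℝ → ℝ} {s : Set ℝ} [s.OrdConnected]
    (hf : ContinuousOn f s) (hm : MapsTo f s s) {n : ℕ} {b c : ℕ → ℝ} (hb : ∀ i ≤ n, b i ∈ s)
    (hc : ∀ i ≤ n, c i ∈ s) (hb0 : b n = b 0) (hc0 : c n = c 0)
    (hcov : ∀ i < n, uIcc (b (i + 1)) (c (i + 1)) ⊆ f '' uIcc (b i) (c i)) :
    ∃ z ∈ s, f^[n] z = z ∧ ∀ i ≤ n, f^[i] z ∈ uIcc (b i) (c i) := by
  obtain ⟨u, v, hu, hv, hmap⟩ := exists_uIcc_iterate_mapsTo hf n b c hb hc hcov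
  have hsub : uIcc u v ⊆ uIcc (b 0) (c 0) := hmap 0 (Nat.zero_le _)
  have hs : uIcc u v ⊆ s :=
    hsub.trans (OrdConnected.uIcc_subset ‹_› (hb 0 (Nat.zero_le _)) (hc 0 (Nat.zero_le _)))
  have hcont : ContinuousOn (fun w => f^[n] w - w) (uIcc u v) :=
    ((hf.iterate hm n).mono hs).sub continuousOn_id
  have h0 : (0 : ℝ) ∈ uIcc (f^[n] u - u) (f^[n] v - v) := by
    have h1 := hsub left_mem_uIcc
    have h2 := hsub right_mem_uIcc
    rw [hu, hv, hb0, hc0]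
    simp only [mem_uIcc] at *
    grind
  obtain ⟨z, hz, hz0⟩ := intermediate_value_uIcc hcont h0
  exact ⟨z, hs hz, sub_eq_zero.1 hz0, fun i hi => hmap i hi hz⟩

lemma mul_sub_pos_iff_sameSide {u v a : ℝ} :
    0 < (u - a) * (v - a) ↔ (u < a ∧ v < a) ∨ (a < u ∧ a < v) := by
  rw [mul_pos_iff]; grind

lemma mul_sub_neg_iff_opposite {u v a : ℝ} :
    (u - a) * (v - a) < 0 ↔ (u < a ∧ a < v) ∨ (a < u ∧ v < a) := by
  rw [mul_neg_iff]; grind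

/-- A loop of points, each lying between `a` and the image of the previous one, is shadowed by a
periodic orbit with the same itinerary with respect to `a`. -/
lemma exists_iterate_eq_self_of_loop {f : ℝ → ℝ} {s : Set ℝ} {a : ℝ} [s.OrdConnected]
    (hf : ContinuousOn f s) (hm : MapsTo f s s)
    (has : a ∈ s) (hfa : f a = a) {n : ℕ} {y : ℕ → ℝ} (hy : ∀ i, y i ∈ s) (hyn : y n = y 0)
    (hstep : ∀ i < n, y (i + 1) ∈ uIcc a (f (y i))) {k : ℕ} (hk : k < n) {a' : ℝ}
    (ha' : a' ∈ uIcc a (y k)) (hne : a' ≠ a) (hfa' : f a' = a) :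
    ∃ z ∈ s, f^[n] z = z ∧ ∀ i ≤ n, 0 < (f^[i] z - a) * (y i - a) := by
  have hc0 : ∀ j ≤ n, (if j % n = k then a' else a) ∈ uIcc a (y j) := by
    intro j hj
    split_ifs with h
    · have : y j = y k := by
        rcases hj.lt_or_eq with h3 | rfl
        · rw [← h, Nat.mod_eq_of_lt h3]
        · rw [← h, Nat.mod_self, hyn]
      rwa [this]
    · exact left_mem_uIcc
  have hcov : ∀ i < n, uIcc (y (i + 1)) (if (i + 1) % n = k then a' else a) ⊆
      f '' uIcc (y i) (if i % n = k then a' else a) := by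
    intro i hi
    have h1 : f (if i % n = k then a' else a) = a := by split_ifs <;> assumption
    have h2 : uIcc (y i) (if i % n = k then a' else a) ⊆ s :=
      OrdConnected.uIcc_subset ‹_› (hy i)
        (OrdConnected.uIcc_subset ‹_› has (hy i) (hc0 i hi.le))
    refine Subset.trans ?_ (intermediate_value_uIcc (hf.mono h2))
    rw [h1, uIcc_comm (f (y i))]
    have h3 := hstep i hi
    exact uIcc_subset_uIcc h3 (uIcc_subset_uIcc left_mem_uIcc h3 (hc0 (i + 1) hi))
  obtain ⟨z, hz, hzn, hzi⟩ := exists_iterate_eq_self_of_covers hf hm (n := n) (b := y)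
    (c := fun i => if i % n = k then a' else a) (fun i _ => hy i)
    (fun i hi => OrdConnected.uIcc_subset ‹_› has (hy i) (hc0 i hi))
    hyn (by simp only [Nat.mod_self, Nat.zero_mod]; congr) hcov
  have key : f^[k] z ≠ a := by
    intro h
    have := hzi k hk.le
    rw [Nat.mod_eq_of_lt hk, if_pos rfl, h] at this
    simp only [mem_uIcc] at this ha'
    grind
  have hna : ∀ i ≤ n, f^[i] z ≠ a := by
    intro i hi h
    apply key
    have h1 : f^[k] z = f^[k + n] z := by rw [iterate_add_apply, hzn]
    rw [h1, show k + n = (k + n - i) + i by omega, iterate_add_apply, h,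
      iterate_fixed hfa]
  refine ⟨z, hz, hzn, fun i hi => ?_⟩
  have h1 := hzi i hi
  have h2 := hna i hi
  rw [mul_sub_pos_iff_sameSide]
  split_ifs at h1 with h
  · have : y i = y k := by
      rcases hi.lt_or_eq with h3 | rfl
      · rw [← h, Nat.mod_eq_of_lt h3]
      · rw [← h, Nat.mod_self, hyn]
    simp only [mem_uIcc] at h1 ha'
    grind
  · simp only [mem_uIcc] at h1
    grind

/-- `f` is a continuous self-map of `[b, c]` whose only fixed point is `a`. -/
structure HasUniqueFixedPoint (f : ℝ → ℝ) (b c a : ℝ) : Prop where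
  cont : ContinuousOn f (Icc b c)
  maps : MapsTo f (Icc b c) (Icc b c)
  mem : a ∈ Icc b c
  fixed : f a = a
  uniq : ∀ x ∈ Icc b c, f x = x → x = a

namespace HasUniqueFixedPoint

variable {f g : ℝ → ℝ} {b c a : ℝ}

/-- Every point moves towards the unique fixed point. -/
lemma lt_map_or_map_lt (H : HasUniqueFixedPoint f b c a) {x : ℝ} (hx : x ∈ Icc b c) (hxa : x ≠ a) :
    (x < a ∧ x < f x) ∨ (a < x ∧ f x < x) := by
  have hne : f x ≠ x := fun h => hxa (H.uniq x hx h)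
  have hb : b ∈ Icc b c := ⟨le_rfl, hx.1.trans hx.2⟩
  have hc : c ∈ Icc b c := ⟨hx.1.trans hx.2, le_rfl⟩
  rcases lt_or_gt_of_ne hxa with h | h
  · refine Or.inl ⟨h, lt_of_not_ge fun hle => ?_⟩
    have hsub : uIcc b x ⊆ Icc b c := ordConnected_Icc.uIcc_subset hb hx
    have h0 : (0 : ℝ) ∈ uIcc (f b - b) (f x - x) := by
      have := (H.maps hb).1
      rw [mem_uIcc]; right; constructor <;> linarith
    obtain ⟨z, hz, hz0⟩ :=
      intermediate_value_uIcc ((H.cont.mono hsub).sub continuousOn_id) h0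
    have := H.uniq z (hsub hz) (sub_eq_zero.1 hz0)
    rw [uIcc_of_le hx.1] at hz
    linarith [hz.2]
  · refine Or.inr ⟨h, lt_of_not_ge fun hle => ?_⟩
    have hsub : uIcc x c ⊆ Icc b c := ordConnected_Icc.uIcc_subset hx hc
    have h0 : (0 : ℝ) ∈ uIcc (f x - x) (f c - c) := by
      have := (H.maps hc).2
      rw [mem_uIcc]; right; constructor <;> linarith
    obtain ⟨z, hz, hz0⟩ :=
      intermediate_value_uIcc ((H.cont.mono hsub).sub continuousOn_id) h0
    have := H.uniq z (hsub hz) (sub_eq_zero.1 hz0)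
    rw [uIcc_of_le hx.2] at hz
    linarith [hz.1]

lemma uIcc_subset (H : HasUniqueFixedPoint f b c a) {u : ℝ} (hu : u ∈ Icc b c) :
    uIcc a u ⊆ Icc b c :=
  ordConnected_Icc.uIcc_subset H.mem hu

lemma exists_map_eq (H : HasUniqueFixedPoint f b c a) {u w : ℝ} (hu : u ∈ Icc b c)
    (hw : w ∈ uIcc a u) (hsign : (f w - a) * (w - a) * ((f u - a) * (u - a)) < 0) :
    ∃ a' ∈ uIcc a u, a' ≠ a ∧ f a' = a := by
  have hsub : uIcc w u ⊆ uIcc a u := uIcc_subset_uIcc hw right_mem_uIcc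
  have hcases := mul_neg_iff.1 hsign
  simp only [mul_sub_pos_iff_sameSide, mul_sub_neg_iff_opposite] at hcases
  rw [mem_uIcc] at hw
  have h0 : a ∈ uIcc (f w) (f u) := by
    rw [mem_uIcc]; clear hsub; grind
  obtain ⟨a', h1, h2⟩ :=
    intermediate_value_uIcc (H.cont.mono (hsub.trans (H.uIcc_subset hu))) h0
  refine ⟨a', hsub h1, ?_, h2⟩
  rw [mem_uIcc] at h1
  clear hsub; grind

lemma iterate_ne (H : HasUniqueFixedPoint f b c a) {z : ℝ} {n : ℕ} (hn : 0 < n)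
    (hz : f^[n] z = z) (hza : z ≠ a) (i : ℕ) : f^[i] z ≠ a := by
  intro h
  apply hza
  have h1 : f^[n * i] z = z := (show IsPeriodicPt f n z from hz).mul_const i
  have h2 : i ≤ n * i := Nat.le_mul_of_pos_left i hn
  rw [← h1, ← Nat.sub_add_cancel h2, iterate_add_apply, h, iterate_fixed H.fixed]

lemma abs_map_sub_lt (H : HasUniqueFixedPoint f b c a) {x : ℝ} (hx : x ∈ Icc b c)
    (hs : 0 < (x - a) * (f x - a)) : |f x - a| < |x - a| := by
  rw [mul_sub_pos_iff_sameSide] at hs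
  have := H.lt_map_or_map_lt hx (by rintro rfl; grind)
  grind

lemma exists_map_opposite (H : HasUniqueFixedPoint f b c a) {z : ℝ} (hzs : z ∈ Icc b c) {n : ℕ}
    (hn : 0 < n) (hz : f^[n] z = z) (hza : z ≠ a) :
    ∃ i < n, (f^[i] z - a) * (f^[i + 1] z - a) < 0 := by
  by_contra! hcon
  have hlt : ∀ i ≤ n, 0 < i → |f^[i] z - a| < |z - a| := by
    intro i hi hi0
    induction i, hi0 using Nat.le_induction with
    | base =>
      exact H.abs_map_sub_lt hzs (lt_of_le_of_ne (hcon 0 hn) (Ne.symm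
        (mul_ne_zero (sub_ne_zero.2 hza) (sub_ne_zero.2 (H.iterate_ne hn hz hza 1)))))
    | succ i h1 ih =>
      refine lt_trans ?_ (ih (by omega))
      have h2 := hcon i (by omega)
      rw [iterate_succ_apply'] at h2 ⊢
      refine H.abs_map_sub_lt (H.maps.iterate i hzs) (lt_of_le_of_ne h2 (Ne.symm
        (mul_ne_zero (sub_ne_zero.2 (H.iterate_ne hn hz hza i)) (sub_ne_zero.2 ?_))))
      rw [← iterate_succ_apply' f]
      exact H.iterate_ne hn hz hza (i + 1)
  have := hlt n le_rfl hn
  rw [hz] at this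
  exact lt_irrefl _ this

/-- Following a closed alternating chain of points produces a point of period two. -/
lemma exists_iterate_two_eq (H : HasUniqueFixedPoint f b c a) {y : ℕ → ℝ} {n : ℕ} (hn : 0 < n)
    (hy : ∀ i, y i ∈ Icc b c) (hper : Periodic y n)
    (halt : ∀ i, (y i - a) * (y (i + 1) - a) < 0)
    (hstep : ∀ i, y (i + 1) ∈ uIcc a (f (y i))) :
    ∃ z ∈ Icc b c, z ≠ a ∧ f^[2] z = z := by
  by_contra! hcon
  have H2 : HasUniqueFixedPoint f^[2] b c a :=
    ⟨H.cont.iterate H.maps 2, H.maps.iterate 2, H.mem, iterate_fixed H.fixed 2,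
      fun x hx h => by by_contra hxa; exact hcon x hx hxa h⟩
  have hex : ∃ i, |y i - a| ≤ |y (i + 2) - a| := by
    by_contra! hlt
    have hanti : StrictAnti fun k => |y (2 * k) - a| :=
      strictAnti_nat_of_succ_lt fun k => by simpa [mul_add] using hlt (2 * k)
    have := hanti hn
    have h2 := hper.nat_mul 2 0
    simp only [Nat.cast_id, zero_add] at h2
    simp only [mul_zero, h2] at this
    exact lt_irrefl _ this
  obtain ⟨i, hi⟩ := hex
  have hs1 := mul_sub_neg_iff_opposite.1 (halt i)
  have hs2 := mul_sub_neg_iff_opposite.1 (halt (i + 1))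
  have hcov : y (i + 1) ∈ uIcc (f a) (f (y i)) := by rw [H.fixed]; exact hstep i
  obtain ⟨w, hw, hfw⟩ :=
    intermediate_value_uIcc (H.cont.mono (H.uIcc_subset (hy i))) hcov
  have hwa : w ≠ a := by
    rintro rfl
    rw [H.fixed] at hfw
    grind
  have h3 := hstep (i + 1)
  have h4 := H2.lt_map_or_map_lt (H.uIcc_subset (hy i) hw) hwa
  rw [show f^[2] w = f (f w) from rfl, hfw] at h4
  rw [mem_uIcc] at h3 hw
  rw [show i + 1 + 1 = i + 2 from rfl] at *
  clear hcon H2 hcov hstep halt hy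
  rcases abs_cases (y i - a) with h5 | h5 <;> rcases abs_cases (y (i + 2) - a) with h6 | h6 <;>
    grind

end HasUniqueFixedPoint

namespace HasUniqueFixedPoint

variable {f g : ℝ → ℝ} {i1 i2 j1 j2 a : ℝ}

/-- Periodic orbits of `g` force periodic orbits of `f` with the same itinerary, or a point of period
two if the orbit alternates around `a`. -/
lemma exists_same_itinerary (Hg : HasUniqueFixedPoint g i1 i2 a)
    (Hf : HasUniqueFixedPoint f j1 j2 a) (hIJ : Icc i1 i2 ⊆ Icc j1 j2)
    (hgerm : (∀ u ∈ Icc i1 i2, u ≠ a → ∃ w ∈ uIcc a u, (f w - a) * (w - a) < 0) ∨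
      (∀ u ∈ Icc i1 i2, u ≠ a → ∃ w ∈ uIcc a u, 0 < (f w - a) * (w - a)))
    (hrep : ∀ x ∈ Icc i1 i2, ∃ y ∈ uIcc x a, g y = g x ∧ uIcc (g y) a ⊆ uIcc (f y) a)
    {x : ℝ} (hx : x ∈ Icc i1 i2) {n : ℕ} (hn : 0 < n) (hxn : g^[n] x = x) (hxa : x ≠ a) :
    (∃ z ∈ Icc j1 j2, f^[n] z = z ∧ ∀ i ≤ n, 0 < (f^[i] z - a) * (g^[i] x - a)) ∨
    ((∀ i, (g^[i] x - a) * (g^[i + 1] x - a) < 0) ∧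
      ∃ z ∈ Icc j1 j2, z ≠ a ∧ f^[2] z = z) := by
  have hmem : ∀ i, g^[i] x ∈ Icc i1 i2 := fun i => Hg.maps.iterate i hx
  have hxi : ∀ i, g^[i] x ≠ a := Hg.iterate_ne hn hxn hxa
  choose! ψ hψ1 hψ2 hψ3 using hrep
  set y : ℕ → ℝ := fun i => ψ (g^[i] x) with hy
  have hgy : ∀ i, g (y i) = g^[i + 1] x := fun i => by
    rw [iterate_succ_apply']; exact hψ2 _ (hmem i)
  have hyx : ∀ i, y i ∈ uIcc a (g^[i] x) := fun i => by
    rw [uIcc_comm]; exact hψ1 _ (hmem i)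
  have hyI : ∀ i, y i ∈ Icc i1 i2 := fun i => Hg.uIcc_subset (hmem i) (hyx i)
  have hya : ∀ i, y i ≠ a := fun i h => hxi (i + 1) (by rw [← hgy, h, Hg.fixed])
  have hfx : ∀ i, g^[i + 1] x ∈ uIcc a (f (y i)) := fun i => by
    have := hψ3 _ (hmem i) left_mem_uIcc
    rw [uIcc_comm, ← hgy]; exact this
  have hstep : ∀ i, y (i + 1) ∈ uIcc a (f (y i)) := fun i =>
    uIcc_subset_uIcc left_mem_uIcc (hfx i) (hyx (i + 1))
  have hside : ∀ i, (y i < a ∧ g^[i] x < a) ∨ (a < y i ∧ a < g^[i] x) := fun i => by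
    have h1 := hyx i
    have h2 := hya i
    rw [mem_uIcc] at h1
    grind
  have hfside : ∀ i, (f (y i) < a ∧ g^[i + 1] x < a) ∨ (a < f (y i) ∧ a < g^[i + 1] x) :=
    fun i => by
    have h1 := hfx i
    have h2 := hxi (i + 1)
    rw [mem_uIcc] at h1
    grind
  have hyn : Periodic y n := fun i => by simp only [hy, iterate_add_apply, hxn]
  have main : ∀ k < n, ∀ w ∈ uIcc a (y k),
      (f w - a) * (w - a) * ((f (y k) - a) * (y k - a)) < 0 →
      ∃ z ∈ Icc j1 j2, f^[n] z = z ∧ ∀ i ≤ n, 0 < (f^[i] z - a) * (g^[i] x - a) := by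
    intro k hk w hw hsign
    obtain ⟨a', h1, h2, h3⟩ := Hf.exists_map_eq (hIJ (hyI k)) hw hsign
    obtain ⟨z, hz, hzn, hzi⟩ := exists_iterate_eq_self_of_loop Hf.cont Hf.maps Hf.mem Hf.fixed
      (fun i => hIJ (hyI i)) (by simpa using hyn 0) (fun i _ => hstep i) hk h1 h2 h3
    refine ⟨z, hz, hzn, fun i hi => ?_⟩
    have h4 := hzi i hi
    have h5 := hside i
    rw [mul_sub_pos_iff_sameSide] at h4 ⊢
    grind
  rcases hgerm with hflip | hstay
  · by_cases hcon : ∃ k < n, 0 < (g^[k] x - a) * (g^[k + 1] x - a)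
    · obtain ⟨k, hk, hpos⟩ := hcon
      obtain ⟨w, hw, hneg⟩ := hflip _ (hyI k) (hya k)
      refine Or.inl (main k hk w hw (mul_neg_of_neg_of_pos hneg ?_))
      rw [mul_sub_pos_iff_sameSide] at hpos ⊢
      have h1 := hside k
      have h2 := hfside k
      grind
    · push Not at hcon
      have halt : ∀ i, (g^[i] x - a) * (g^[i + 1] x - a) < 0 := by
        intro i
        have hper : ∀ m, g^[i + m] x = g^[i % n + m] x := fun m => by
          have : g^[i] x = g^[i % n] x :=
            ((show IsPeriodicPt g n x from hxn).iterate_mod_apply i).symm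
          rw [add_comm, iterate_add_apply, this, ← iterate_add_apply, add_comm]
        have h0 := hper 0
        rw [add_zero, add_zero] at h0
        rw [h0, hper 1]
        exact lt_of_le_of_ne (hcon _ (Nat.mod_lt _ hn))
          (mul_ne_zero (sub_ne_zero.2 (hxi _)) (sub_ne_zero.2 (hxi _)))
      refine Or.inr ⟨halt, Hf.exists_iterate_two_eq hn (fun i => hIJ (hyI i)) hyn
        (fun i => ?_) hstep⟩
      have h1 := hside i
      have h2 := hside (i + 1)
      have h3 := halt i
      rw [mul_sub_neg_iff_opposite] at h3 ⊢
      grind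
  · obtain ⟨k, hk, hneg⟩ := Hg.exists_map_opposite hx hn hxn hxa
    obtain ⟨w, hw, hpos⟩ := hstay _ (hyI k) (hya k)
    refine Or.inl (main k hk w hw (mul_neg_of_pos_of_neg hpos ?_))
    rw [mul_sub_neg_iff_opposite] at hneg ⊢
    have h1 := hside k
    have h2 := hfside k
    grind

lemma chi_eq (H : HasUniqueFixedPoint f j1 j2 a) {x : ℝ} (hx : x ∈ Icc j1 j2) (hxa : x ≠ a)
    (hfxa : f x ≠ a) : chi f x = if (x - a) * (f x - a) < 0 then 1 / 2 else 0 := by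
  unfold chi
  congr 1
  rw [eq_iff_iff, mul_sub_neg_iff_opposite]
  have h1 := H.lt_map_or_map_lt hx hxa
  have h2 := H.lt_map_or_map_lt (H.maps hx) hfxa
  rw [mul_nonpos_iff]
  grind

end HasUniqueFixedPoint

lemma overRotNum_eq_of_iterate_eq {f : ℝ → ℝ} {y : ℝ} {n : ℕ} (hn : 0 < n) (hy : f^[n] y = y) :
    overRotNum f y = (∑ i ∈ Finset.range n, chi f (f^[i] y)) / n := by
  have hper : IsPeriodicPt f n y := hy
  obtain ⟨k, rfl⟩ := hper.minimalPeriod_dvd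
  have hk : 0 < k := Nat.pos_of_mul_pos_left hn
  have hsum : ∀ k : ℕ, ∑ i ∈ Finset.range (minimalPeriod f y * k), chi f (f^[i] y) =
      k * ∑ i ∈ Finset.range (minimalPeriod f y), chi f (f^[i] y) := by
    intro k
    induction k with
    | zero => simp
    | succ k ih =>
      rw [mul_add, mul_one, Finset.sum_range_add, ih, Nat.cast_succ, add_mul, one_mul]
      congr 1
      refine Finset.sum_congr rfl fun i _ => ?_
      rw [add_comm, iterate_add_apply,
        ((isPeriodicPt_minimalPeriod f y).mul_const k : f^[_] y = y)]
  rw [overRotNum, hsum, Nat.cast_mul, mul_comm (minimalPeriod f y : ℝ)]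
  rw [mul_div_mul_left _ _ (Nat.cast_ne_zero.2 hk.ne')]

lemma overRotNum_eq_half {f : ℝ → ℝ} {y : ℝ} {n : ℕ} (hn : 0 < n) (hy : f^[n] y = y)
    (h : ∀ i < n, chi f (f^[i] y) = 1 / 2) : overRotNum f y = 1 / 2 := by
  rw [overRotNum_eq_of_iterate_eq hn hy,
    Finset.sum_congr rfl fun i hi => h i (Finset.mem_range.1 hi)]
  have : (n : ℝ) ≠ 0 := Nat.cast_ne_zero.2 hn.ne'
  rw [Finset.sum_const, Finset.card_range, nsmul_eq_mul]
  field_simp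

namespace HasUniqueFixedPoint

variable {f g : ℝ → ℝ} {i1 i2 j1 j2 a : ℝ}

lemma overRotNum_eq_of_same_itinerary (Hg : HasUniqueFixedPoint g i1 i2 a)
    (Hf : HasUniqueFixedPoint f j1 j2 a) {x z : ℝ} (hx : x ∈ Icc i1 i2) (hz : z ∈ Icc j1 j2)
    {n : ℕ} (hn : 0 < n) (hxn : g^[n] x = x) (hzn : f^[n] z = z)
    (hside : ∀ i ≤ n, 0 < (f^[i] z - a) * (g^[i] x - a)) : overRotNum f z = overRotNum g x := by
  rw [overRotNum_eq_of_iterate_eq hn hxn, overRotNum_eq_of_iterate_eq hn hzn]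
  congr 1
  refine Finset.sum_congr rfl fun i hi => ?_
  have hi' := Finset.mem_range.1 hi
  have h1 := mul_sub_pos_iff_sameSide.1 (hside i hi'.le)
  have h2 := mul_sub_pos_iff_sameSide.1 (hside (i + 1) hi')
  rw [iterate_succ_apply', iterate_succ_apply'] at h2
  rw [Hf.chi_eq (Hf.maps.iterate i hz) (by grind) (by grind),
    Hg.chi_eq (Hg.maps.iterate i hx) (by grind) (by grind)]
  congr 1
  rw [eq_iff_iff, mul_sub_neg_iff_opposite, mul_sub_neg_iff_opposite]
  grind

end HasUniqueFixedPoint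

/-- To the left of any point, the sign of `g - g a` is constant near that point. -/
lemma PiecewiseMonotoneOn.exists_left {g : ℝ → ℝ} {b c a : ℝ} (h : PiecewiseMonotoneOn g b c)
    (ha : a ∈ Icc b c) : ∃ δ > 0, (∀ w ∈ Icc b c, a - δ < w → w < a → g w ≤ g a) ∨
      (∀ w ∈ Icc b c, a - δ < w → w < a → g a ≤ g w) := by
  obtain ⟨n, t, ht, h0, hl, hmono⟩ := h
  rcases ha.1.eq_or_lt with rfl | hba
  · exact ⟨1, one_pos, Or.inl fun w hw _ h2 => absurd hw.1 (not_le.2 h2)⟩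
  obtain ⟨i, hi, hmax⟩ := Finset.exists_max_image (Finset.univ.filter fun i => t i < a) id
    ⟨0, by simp [h0, hba]⟩
  simp only [Finset.mem_filter, Finset.mem_univ, true_and, id] at hi hmax
  have hne : i ≠ Fin.last n := by rintro rfl; rw [hl] at hi; exact absurd ha.2 (not_le.2 hi)
  obtain ⟨k, rfl⟩ := Fin.exists_castSucc_eq.2 hne
  have hk : a ≤ t k.succ := by
    by_contra! hlt
    exact absurd (hmax _ hlt) (not_le.2 Fin.castSucc_lt_succ)
  refine ⟨a - t k.castSucc, sub_pos.2 hi, ?_⟩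
  rcases hmono k with hm | hm
  · exact Or.inl fun w _ h1 h2 =>
      hm ⟨by linarith, by linarith⟩ ⟨hi.le, hk⟩ h2.le
  · exact Or.inr fun w _ h1 h2 =>
      hm ⟨by linarith, by linarith⟩ ⟨hi.le, hk⟩ h2.le

/-- To the right of any point, the sign of `g - g a` is constant near that point. -/
lemma PiecewiseMonotoneOn.exists_right {g : ℝ → ℝ} {b c a : ℝ} (h : PiecewiseMonotoneOn g b c)
    (ha : a ∈ Icc b c) : ∃ δ > 0, (∀ w ∈ Icc b c, w < a + δ → a < w → g w ≤ g a) ∨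
      (∀ w ∈ Icc b c, w < a + δ → a < w → g a ≤ g w) := by
  obtain ⟨n, t, ht, h0, hl, hmono⟩ := h
  rcases ha.2.eq_or_lt with rfl | hba
  · exact ⟨1, one_pos, Or.inl fun w hw _ h2 => absurd hw.2 (not_le.2 h2)⟩
  obtain ⟨i, hi, hmin⟩ := Finset.exists_min_image (Finset.univ.filter fun i => a < t i) id
    ⟨Fin.last n, by simp [hl, hba]⟩
  simp only [Finset.mem_filter, Finset.mem_univ, true_and, id] at hi hmin
  have hne : i ≠ 0 := by rintro rfl; rw [h0] at hi; exact absurd ha.1 (not_le.2 hi)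
  obtain ⟨k, rfl⟩ := Fin.exists_succ_eq.2 hne
  have hk : t k.castSucc ≤ a := by
    by_contra! hlt
    exact absurd (hmin _ hlt) (not_le.2 Fin.castSucc_lt_succ)
  refine ⟨t k.succ - a, sub_pos.2 hi, ?_⟩
  rcases hmono k with hm | hm
  · exact Or.inr fun w _ h1 h2 =>
      hm ⟨hk, hi.le⟩ ⟨by linarith, by linarith⟩ h2.le
  · exact Or.inl fun w _ h1 h2 =>
      hm ⟨hk, hi.le⟩ ⟨by linarith, by linarith⟩ h2.le

lemma exists_lt_of_not_isLocalMinOn {g : ℝ → ℝ} {s : Set ℝ} {a : ℝ} (h : ¬ IsLocalMinOn g s a)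
    {δ : ℝ} (hδ : 0 < δ) : ∃ w ∈ s, |w - a| < δ ∧ g w < g a := by
  by_contra! hcon
  refine h (eventually_nhdsWithin_iff.2 (Metric.eventually_nhds_iff.2 ⟨δ, hδ, ?_⟩))
  exact fun w hw hs => hcon w hs hw

lemma exists_gt_of_not_isLocalMaxOn {g : ℝ → ℝ} {s : Set ℝ} {a : ℝ} (h : ¬ IsLocalMaxOn g s a)
    {δ : ℝ} (hδ : 0 < δ) : ∃ w ∈ s, |w - a| < δ ∧ g a < g w := by
  by_contra! hcon
  refine h (eventually_nhdsWithin_iff.2 (Metric.eventually_nhds_iff.2 ⟨δ, hδ, ?_⟩))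
  exact fun w hw hs => hcon w hs hw

/-- Near a fixed point which is not a local extremum, a piecewise monotone map either swaps the two
sides of the fixed point or preserves them. -/
lemma PiecewiseMonotoneOn.swaps_or_preserves_sides {g : ℝ → ℝ} {b c a : ℝ}
    (h : PiecewiseMonotoneOn g b c) (ha : a ∈ Icc b c) (hga : g a = a)
    (hmax : ¬ IsLocalMaxOn g (Icc b c) a) (hmin : ¬ IsLocalMinOn g (Icc b c) a) :
    (∀ u ∈ Icc b c, u ≠ a → ∃ w ∈ uIcc a u, (g w - a) * (w - a) < 0) ∨
      (∀ u ∈ Icc b c, u ≠ a → ∃ w ∈ uIcc a u, 0 < (g w - a) * (w - a)) := by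
  obtain ⟨δ₁, hδ₁, hleft⟩ := h.exists_left ha
  obtain ⟨δ₂, hδ₂, hright⟩ := h.exists_right ha
  rw [hga] at hleft hright
  have hlow : ∀ δ > 0, ∃ w ∈ Icc b c, |w - a| < δ ∧ g w < a ∧ w ≠ a := fun δ hδ => by
    obtain ⟨w, h1, h2, h3⟩ := exists_lt_of_not_isLocalMinOn hmin hδ
    exact ⟨w, h1, h2, hga ▸ h3, by rintro rfl; exact lt_irrefl _ h3⟩
  have hup : ∀ δ > 0, ∃ w ∈ Icc b c, |w - a| < δ ∧ a < g w ∧ w ≠ a := fun δ hδ => by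
    obtain ⟨w, h1, h2, h3⟩ := exists_gt_of_not_isLocalMaxOn hmax hδ
    exact ⟨w, h1, h2, hga ▸ h3, by rintro rfl; exact lt_irrefl _ h3⟩
  clear hmax hmin h
  rcases hleft with hl | hl <;> rcases hright with hr | hr
  · obtain ⟨w, h1, h2, h3, h4⟩ := hup (min δ₁ δ₂) (lt_min hδ₁ hδ₂)
    rw [lt_min_iff, abs_lt, abs_lt] at h2
    have h5 := hl w h1 (by linarith)
    have h6 := hr w h1 (by linarith)
    grind
  · right
    intro u hu hua
    rcases lt_or_gt_of_ne hua with hlt | hlt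
    · obtain ⟨w, h1, h2, h3, h4⟩ := hlow (min (a - u) (min δ₁ δ₂))
        (lt_min (sub_pos.2 hlt) (lt_min hδ₁ hδ₂))
      rw [lt_min_iff, lt_min_iff, abs_lt, abs_lt, abs_lt] at h2
      have h5 := hr w h1 (by linarith)
      refine ⟨w, ?_, ?_⟩
      · rw [mem_uIcc]; grind
      · rw [mul_sub_pos_iff_sameSide]; grind
    · obtain ⟨w, h1, h2, h3, h4⟩ := hup (min (u - a) (min δ₁ δ₂))
        (lt_min (sub_pos.2 hlt) (lt_min hδ₁ hδ₂))
      rw [lt_min_iff, lt_min_iff, abs_lt, abs_lt, abs_lt] at h2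
      have h5 := hl w h1 (by linarith)
      refine ⟨w, ?_, ?_⟩
      · rw [mem_uIcc]; grind
      · rw [mul_sub_pos_iff_sameSide]; grind
  · left
    intro u hu hua
    rcases lt_or_gt_of_ne hua with hlt | hlt
    · obtain ⟨w, h1, h2, h3, h4⟩ := hup (min (a - u) (min δ₁ δ₂))
        (lt_min (sub_pos.2 hlt) (lt_min hδ₁ hδ₂))
      rw [lt_min_iff, lt_min_iff, abs_lt, abs_lt, abs_lt] at h2
      have h5 := hr w h1 (by linarith)
      refine ⟨w, ?_, ?_⟩
      · rw [mem_uIcc]; grind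
      · rw [mul_sub_neg_iff_opposite]; grind
    · obtain ⟨w, h1, h2, h3, h4⟩ := hlow (min (u - a) (min δ₁ δ₂))
        (lt_min (sub_pos.2 hlt) (lt_min hδ₁ hδ₂))
      rw [lt_min_iff, lt_min_iff, abs_lt, abs_lt, abs_lt] at h2
      have h5 := hl w h1 (by linarith)
      refine ⟨w, ?_, ?_⟩
      · rw [mem_uIcc]; grind
      · rw [mul_sub_neg_iff_opposite]; grind
  · obtain ⟨w, h1, h2, h3, h4⟩ := hlow (min δ₁ δ₂) (lt_min hδ₁ hδ₂)
    rw [lt_min_iff, abs_lt, abs_lt] at h2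
    have h5 := hl w h1 (by linarith)
    have h6 := hr w h1 (by linarith)
    grind

/-- Among the points of `[x, a]` with the same image as `x` one is closest to `a`. -/
lemma exists_closest {g : ℝ → ℝ} {x a : ℝ} (hg : ContinuousOn g (uIcc x a)) :
    ∃ y ∈ uIcc x a, g y = g x ∧ ∀ z ∈ uIcc x a, g z = g x → |y - a| ≤ |z - a| := by
  have hc : IsCompact {z ∈ uIcc x a | g z = g x} :=
    isCompact_uIcc.of_isClosed_subset
      (hg.preimage_isClosed_of_isClosed isClosed_Icc isClosed_singleton) fun z hz => hz.1
  obtain ⟨y, hy, hmin⟩ := hc.exists_isMinOn ⟨x, left_mem_uIcc, rfl⟩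
    (f := fun z => |z - a|) (by fun_prop)
  exact ⟨y, hy.1, hy.2, fun z h1 h2 => hmin (a := z) ⟨h1, h2⟩⟩

lemma sameSide_of_alternating {y : ℕ → ℝ} {a : ℝ} {m : ℕ} (h0 : y 0 ≠ a)
    (halt : ∀ i < m, (y i - a) * (y (i + 1) - a) < 0) :
    ∀ i ≤ m, (Even i → 0 < (y 0 - a) * (y i - a)) ∧ (¬ Even i → (y 0 - a) * (y i - a) < 0) := by
  intro i
  induction i with
  | zero => exact fun _ => ⟨fun _ => mul_self_pos.2 (sub_ne_zero.2 h0), fun h => absurd Even.zero h⟩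
  | succ i ih =>
    intro hi
    have h1 := ih (by omega)
    have h2 := halt i (by omega)
    rw [Nat.even_add_one]
    simp only [mul_sub_pos_iff_sameSide, mul_sub_neg_iff_opposite] at h1 h2 ⊢
    grind

namespace HasUniqueFixedPoint

variable {f : ℝ → ℝ} {b c a : ℝ}

lemma exists_innermost (H : HasUniqueFixedPoint f b c a) {z : ℝ} {d : ℕ} (hd : 0 < d)
    (hzd : f^[d] z = z) (hza : z ≠ a) (k : ℕ) :
    ∃ m, 0 < (f^[m] z - a) * (f^[k] z - a) ∧
      ∀ i, 0 < (f^[i] z - a) * (f^[k] z - a) → f^[m] z ∈ uIcc a (f^[i] z) := by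
  have hmod : ∀ i, f^[i % d] z = f^[i] z := (show IsPeriodicPt f d z from hzd).iterate_mod_apply
  obtain ⟨m, hm, hmin⟩ := Finset.exists_min_image
    ((Finset.range d).filter fun i => 0 < (f^[i] z - a) * (f^[k] z - a))
    (fun i => |f^[i] z - a|)
    ⟨k % d, by
      rw [Finset.mem_filter, Finset.mem_range, hmod]
      exact ⟨Nat.mod_lt _ hd, mul_self_pos.2 (sub_ne_zero.2 (H.iterate_ne hd hzd hza k))⟩⟩
  rw [Finset.mem_filter] at hm
  refine ⟨m, hm.2, fun i hi => ?_⟩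
  have h1 := hmin (i % d) (by
    rw [Finset.mem_filter, Finset.mem_range, hmod]; exact ⟨Nat.mod_lt _ hd, hi⟩)
  rw [hmod] at h1
  have h2 := hm.2
  rw [mul_sub_pos_iff_sameSide] at hi h2
  rw [mem_uIcc]
  clear hmin hmod hm
  grind

/-- The two points of a periodic orbit which are closest to `a` on either side of `a`. -/
lemma exists_innermost_pair (H : HasUniqueFixedPoint f b c a) {z : ℝ} (hz : z ∈ Icc b c) {d : ℕ}
    (hd : 0 < d) (hzd : f^[d] z = z) (hza : z ≠ a) :
    ∃ m m', (f^[m] z - a) * (f^[m'] z - a) < 0 ∧ ∀ i,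
      (0 < (f^[i] z - a) * (f^[m] z - a) → f^[m] z ∈ uIcc a (f^[i] z)) ∧
      (0 < (f^[i] z - a) * (f^[m'] z - a) → f^[m'] z ∈ uIcc a (f^[i] z)) := by
  obtain ⟨i, -, hi⟩ := H.exists_map_opposite hz hd hzd hza
  obtain ⟨m, hm, hmin⟩ := H.exists_innermost hd hzd hza i
  obtain ⟨m', hm', hmin'⟩ := H.exists_innermost hd hzd hza (i + 1)
  refine ⟨m, m', ?_, fun l => ⟨fun hl => hmin l ?_, fun hl => hmin' l ?_⟩⟩ <;>
  · simp only [mul_sub_pos_iff_sameSide, mul_sub_neg_iff_opposite] at *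
    clear hmin hmin'
    grind

/-- An orbit of odd period produces, for each larger odd `n`, a closed chain of length `n` all of
whose steps but the last one change the side of `a`. -/
lemma exists_odd_chain (H : HasUniqueFixedPoint f b c a) {z : ℝ} (hz : z ∈ Icc b c) {d : ℕ}
    (hd : Odd d) (hzd : f^[d] z = z) (hza : z ≠ a) {n : ℕ} (hn : Odd n) (hdn : d ≤ n) :
    ∃ y : ℕ → ℝ, (∀ i, y i ∈ Icc b c) ∧ y n = y 0 ∧ (∀ i < n, y (i + 1) ∈ uIcc a (f (y i))) ∧
      (∀ i < n - 1, (y i - a) * (y (i + 1) - a) < 0) ∧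
      0 < (y (n - 1) - a) * (f (y (n - 1)) - a) := by
  obtain ⟨m, m', hopp, hinn⟩ := H.exists_innermost_pair hz hd.pos hzd hza
  set p := f^[m] z with hp
  set q := f^[m'] z with hq
  have hpI : p ∈ Icc b c := H.maps.iterate m hz
  have hqI : q ∈ Icc b c := H.maps.iterate m' hz
  have hX : ∀ i, f^[i] p = f^[i + m] z := fun i => by rw [hp, ← iterate_add_apply]
  have hXa : ∀ i, f^[i] p ≠ a := fun i => by rw [hX]; exact H.iterate_ne hd.pos hzd hza _
  have hXI : ∀ i, f^[i] p ∈ Icc b c := fun i => H.maps.iterate i hpI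
  have hXinn : ∀ i, (0 < (f^[i] p - a) * (p - a) → p ∈ uIcc a (f^[i] p)) ∧
      (0 < (f^[i] p - a) * (q - a) → q ∈ uIcc a (f^[i] p)) := fun i => by rw [hX]; exact hinn _
  have hfp : q ∈ uIcc a (f p) := by
    have h1 := H.lt_map_or_map_lt hpI (hXa 0)
    have h2 := hXinn 1
    have h3 := hXa 1
    simp only [iterate_one, mem_uIcc, mul_sub_pos_iff_sameSide, mul_sub_neg_iff_opposite] at *
    clear hX hXa hXI hXinn hinn hp hq
    grind
  have hfq : p ∈ uIcc a (f q) := by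
    have h1 := H.lt_map_or_map_lt hqI (H.iterate_ne hd.pos hzd hza m')
    have h2 := hinn (m' + 1)
    have h3 := H.iterate_ne hd.pos hzd hza (m' + 1)
    rw [iterate_succ_apply'] at h2 h3
    rw [← hq] at h2 h3
    simp only [mem_uIcc, mul_sub_pos_iff_sameSide, mul_sub_neg_iff_opposite] at *
    clear hX hXa hXI hXinn hinn hp hq
    grind
  have hpd : f^[d] p = p := by
    rw [hX, add_comm, iterate_add_apply, hzd]
  have hex : ∃ j, j < d ∧ ¬ (f^[j] p - a) * (f^[j + 1] p - a) < 0 := by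
    by_contra! hcon
    have h1 := (sameSide_of_alternating (y := fun i => f^[i] p) (hXa 0) hcon d le_rfl).2
      (Nat.not_even_iff_odd.2 hd)
    simp only [hpd, iterate_zero, id] at h1
    exact absurd h1 (not_lt.2 (mul_self_nonneg _))
  classical
  obtain ⟨hjd, hj⟩ := Nat.find_spec hex
  have hjmin : ∀ i < Nat.find hex, (f^[i] p - a) * (f^[i + 1] p - a) < 0 := fun i hi => by
    by_contra hcon
    exact Nat.find_min hex hi ⟨by omega, hcon⟩
  generalize Nat.find hex = j at *
  have hjside := sameSide_of_alternating (y := fun i => f^[i] p) (hXa 0) hjmin j le_rfl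
  simp only [iterate_zero, id] at hjside
  have hjpos : 0 < (f^[j] p - a) * (f^[j + 1] p - a) := lt_of_le_of_ne (not_lt.1 hj)
    (Ne.symm (mul_ne_zero (sub_ne_zero.2 (hXa _)) (sub_ne_zero.2 (hXa _))))
  obtain ⟨N, hN⟩ : ∃ N, n = N + j + 1 := ⟨n - 1 - j, by omega⟩
  have hNj : Even N ↔ Even j := by
    rw [hN, Nat.odd_add_one, Nat.not_odd_iff_even, Nat.even_add] at hn
    exact hn
  set w : ℕ → ℝ := fun e => if Even e then p else q with hw
  have hwalt : ∀ e, (w (e + 1) - a) * (w e - a) < 0 := fun e => by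
    simp only [hw, Nat.even_add_one]
    split_ifs
    · rwa [mul_comm]
    · exact hopp
  have hwstep : ∀ e, w e ∈ uIcc a (f (w (e + 1))) := fun e => by
    simp only [hw, Nat.even_add_one]
    split_ifs <;> assumption
  have hwlast : w N ∈ uIcc a (f^[j + 1] p) := by
    have h1 := hXinn (j + 1)
    simp only [hw, hNj]
    simp only [mul_sub_pos_iff_sameSide, mul_sub_neg_iff_opposite] at *
    split_ifs with h
    · refine h1.1 ?_
      have := hjside.1 h
      clear hX hXa hXI hXinn hinn hp hq hjmin hwalt hwstep
      grind
    · refine h1.2 ?_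
      have := hjside.2 h
      clear hX hXa hXI hXinn hinn hp hq hjmin hwalt hwstep
      grind
  have hwI : ∀ e, w e ∈ Icc b c := fun e => by
    simp only [hw]; split_ifs <;> assumption
  have hw0 : w 0 = p := if_pos Even.zero
  set y : ℕ → ℝ := fun i => if i = n then w N else if i < N then w (N - i) else f^[i - N] p with hy
  have hylt : ∀ i ≤ N, y i = w (N - i) := fun i hi => by
    simp only [hy]
    rw [if_neg (by omega)]
    split_ifs with h
    · rfl
    · obtain rfl : i = N := by omega
      simp [hw0]
  have hyge : ∀ i ≤ j, y (N + i) = f^[i] p := fun i hi => by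
    simp only [hy]
    rw [if_neg (by omega), if_neg (by omega), Nat.add_sub_cancel_left]
  have hyn : y n = w N := if_pos rfl
  have hn1 : n - 1 = N + j := by omega
  refine ⟨y, fun i => ?_, by rw [hyn, hylt 0 (Nat.zero_le _)]; rfl, fun i hi => ?_,
    fun i hi => ?_, ?_⟩
  · simp only [hy]
    split_ifs
    · exact hwI _
    · exact hwI _
    · exact hXI _
  · rcases lt_or_ge i N with h | h
    · rw [hylt i h.le, hylt (i + 1) h, show N - i = N - (i + 1) + 1 by omega]
      exact hwstep _
    · obtain ⟨k, rfl⟩ := Nat.exists_eq_add_of_le h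
      rw [hyge k (by omega), ← iterate_succ_apply' f]
      rcases (show k ≤ j by omega).lt_or_eq with hk | rfl
      · rw [add_assoc, hyge (k + 1) hk]
        exact right_mem_uIcc
      · rw [← hN, hyn]
        exact hwlast
  · rcases lt_or_ge i N with h | h
    · rw [hylt i h.le, hylt (i + 1) h, show N - i = N - (i + 1) + 1 by omega]
      exact hwalt _
    · obtain ⟨k, rfl⟩ := Nat.exists_eq_add_of_le h
      rw [hyge k (by omega), add_assoc, hyge (k + 1) (by omega)]
      exact hjmin k (by omega)
  · rw [hn1, hyge j le_rfl, ← iterate_succ_apply' f]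
    exact hjpos

lemma three_le_of_odd (H : HasUniqueFixedPoint f b c a) {z : ℝ} (hz : z ∈ Icc b c) {d : ℕ}
    (hd : Odd d) (hzd : f^[d] z = z) (hza : z ≠ a) : 3 ≤ d := by
  obtain ⟨k, rfl⟩ := hd
  rcases k with _ | k
  · exact absurd (H.uniq z hz hzd) hza
  · omega

lemma abs_sub_le_of_mem_uIcc {a u v : ℝ} (h : u ∈ uIcc a v) : |u - a| ≤ |v - a| := by
  rw [mem_uIcc] at h
  grind

/-- An odd period forces all larger odd periods. -/
lemma exists_minimalPeriod_eq_of_odd (H : HasUniqueFixedPoint f b c a) {z : ℝ} (hz : z ∈ Icc b c)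
    {d : ℕ} (hd : Odd d) (hzd : f^[d] z = z) (hza : z ≠ a) {n : ℕ} (hn : Odd n) (hdn : d ≤ n) :
    ∃ x ∈ Icc b c, x ∈ periodicPts f ∧ minimalPeriod f x = n := by
  obtain ⟨y, hyI, hyn, hstep, halt, hlast⟩ := H.exists_odd_chain hz hd hzd hza hn hdn
  have h3 := H.three_le_of_odd hz hd hzd hza
  have hn1 : n - 1 + 1 = n := by omega
  have h0 : y 0 ∈ uIcc a (f (y (n - 1))) := by
    have := hstep (n - 1) (by omega)
    rwa [hn1, hyn] at this
  have hlt := H.abs_map_sub_lt (hyI (n - 1)) hlast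
  have hpar := sameSide_of_alternating (y := y) (m := n - 1)
    (by rintro h; have := halt 0 (by omega); simp [h] at this) halt
  have hpar1 := (hpar (n - 1) le_rfl).1 (by
    rw [← hn1, Nat.odd_add_one, Nat.not_odd_iff_even] at hn; exact hn)
  have hy0 : y 0 ∈ uIcc a (y (n - 1)) := by
    rw [mul_sub_pos_iff_sameSide] at hlast
    rw [mem_uIcc] at h0 ⊢
    clear hpar halt hstep
    grind
  have hf0 : (f (y 0) - a) * (y 0 - a) < 0 := by
    have h1 := hstep 0 (by omega)
    have h2 := halt 0 (by omega)
    rw [mul_sub_neg_iff_opposite] at h2 ⊢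
    rw [mem_uIcc] at h1
    clear hpar halt hstep
    grind
  obtain ⟨a', ha', hne, hfa'⟩ := H.exists_map_eq (hyI (n - 1)) hy0
    (mul_neg_of_neg_of_pos hf0 (by rwa [mul_comm]))
  obtain ⟨x, hx, hxn, hxi⟩ := exists_iterate_eq_self_of_loop H.cont H.maps H.mem H.fixed hyI hyn
    hstep (show n - 1 < n by omega) ha' hne hfa'
  have hper : IsPeriodicPt f n x := hxn
  refine ⟨x, hx, mk_mem_periodicPts (by omega) hper, ?_⟩
  have hepos := hper.minimalPeriod_pos (by omega)
  by_contra hcon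
  have hen : minimalPeriod f x < n :=
    lt_of_le_of_ne (hper.minimalPeriod_le (by omega)) hcon
  obtain ⟨k, hk⟩ := hper.minimalPeriod_dvd
  have hxe : f^[minimalPeriod f x] x = x := iterate_minimalPeriod
  generalize minimalPeriod f x = e at *
  have hk1 : 1 ≤ k := by
    rcases k with _ | k
    · omega
    · omega
  have hk2 : e * k = e * (k - 1) + e := by
    obtain ⟨k, rfl⟩ := Nat.exists_eq_add_of_le' hk1
    simp [mul_add]
  have hsame : f^[n - 1] x = f^[e - 1] x := by
    rw [show n - 1 = e - 1 + e * (k - 1) by omega, iterate_add_apply,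
      ((show IsPeriodicPt f e x from hxe).mul_const (k - 1) : f^[_] x = x)]
  have h1 := hxi (n - 1) (by omega)
  have h2 := hxi (e - 1) (by omega)
  have h4 := hxi e hen.le
  have h5 := hxi 0 (by omega)
  have h6 := halt (e - 1) (by omega)
  rw [hsame] at h1
  rw [show e - 1 + 1 = e by omega] at h6
  rw [hxe] at h4
  rw [iterate_zero, id] at h5
  simp only [mul_sub_pos_iff_sameSide, mul_sub_neg_iff_opposite] at *
  clear halt hstep hpar hxi
  grind

/-- A one-sided horseshoe for `f^[2]` yields all even periods. -/
lemma exists_minimalPeriod_eq_of_horseshoe (H : HasUniqueFixedPoint f b c a) {x x' r : ℝ}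
    (hx : x ∈ Icc b c) (hr : r ∈ Icc b c) (hxx' : x' ∈ uIcc a x) (hne : x' ≠ x) (hx'a : x' ≠ a)
    (hopp : (x - a) * (r - a) < 0) (hfx' : r ∈ uIcc a (f x')) (hfr : x ∈ uIcc a (f r))
    (hfx : 0 < (x - a) * (f x - a)) {m : ℕ} (hm : 0 < m) :
    ∃ z ∈ Icc b c, z ∈ periodicPts f ∧ minimalPeriod f z = 2 * m := by
  rw [mul_sub_neg_iff_opposite] at hopp
  rw [mul_sub_pos_iff_sameSide] at hfx
  have hx' : x' ∈ Icc b c := H.uIcc_subset hx hxx'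
  set s : ℕ → ℝ := fun i => if Odd i then r else x' with hs
  set t : ℕ → ℝ := fun i => if Odd i then a else if i % (2 * m) = 0 then x else a with ht
  have hsI : ∀ i, s i ∈ Icc b c := fun i => by simp only [hs]; split_ifs <;> assumption
  have htI : ∀ i, t i ∈ Icc b c := fun i => by
    simp only [ht]; split_ifs
    exacts [H.mem, hx, H.mem]
  have heven : ¬ Odd (2 * m) := Nat.not_odd_iff_even.2 (even_two_mul m)
  have hcov : ∀ i < 2 * m, uIcc (s (i + 1)) (t (i + 1)) ⊆ f '' uIcc (s i) (t i) := by
    intro i _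
    refine Subset.trans ?_ (intermediate_value_uIcc
      (H.cont.mono (ordConnected_Icc.uIcc_subset (hsI i) (htI i))))
    simp only [hs, ht, Nat.odd_add_one]
    by_cases hi : Odd i
    · simp only [hi, not_true, if_true, if_false, H.fixed]
      rw [uIcc_comm (f r)]
      have h1 := uIcc_subset_uIcc_left hfr
      refine Subset.trans ?_ h1
      split_ifs
      · exact uIcc_subset_uIcc hxx' right_mem_uIcc
      · exact uIcc_subset_uIcc hxx' left_mem_uIcc
    · simp only [hi, not_false_eq_true, if_true, if_false]
      refine uIcc_subset_uIcc ?_ ?_ <;> split_ifs <;> simp only [H.fixed, mem_uIcc] at * <;>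
        clear hsI htI <;> grind
  obtain ⟨z, hz, hzn, hzi⟩ := exists_iterate_eq_self_of_covers H.cont H.maps (n := 2 * m)
    (b := s) (c := t) (fun i _ => hsI i) (fun i _ => htI i) (by simp [hs])
    (by simp [ht]) hcov
  have hz0 : z ∈ uIcc x' x := by simpa [hs, ht] using hzi 0 (Nat.zero_le _)
  have hodd : ∀ i ≤ 2 * m, Odd i → f^[i] z ∈ uIcc r a := fun i hi h => by
    simpa only [hs, ht, h, if_true] using hzi i hi
  have hev : ∀ i < 2 * m, 0 < i → ¬ Odd i → f^[i] z ∈ uIcc x' a := fun i hi h0 h => by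
    simpa only [hs, ht, h, if_false, Nat.mod_eq_of_lt hi, h0.ne'] using hzi i hi.le
  have hper : IsPeriodicPt f (2 * m) z := hzn
  refine ⟨z, hz, mk_mem_periodicPts (by omega) hper, ?_⟩
  have hepos := hper.minimalPeriod_pos (by omega)
  by_contra hcon
  have hlt : minimalPeriod f z < 2 * m :=
    lt_of_le_of_ne (hper.minimalPeriod_le (by omega)) hcon
  have hze : f^[minimalPeriod f z] z = z := iterate_minimalPeriod
  generalize minimalPeriod f z = e at *
  clear hcov hzi hsI htI
  by_cases he : Odd e
  · have h1 := hodd e hlt.le he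
    rw [hze] at h1
    simp only [mem_uIcc] at *
    clear hodd hev
    grind
  · have h1 := hev e hlt hepos he
    rw [hze] at h1
    have hzx : z = x' := by
      simp only [mem_uIcc] at *
      clear hodd hev
      grind
    subst hzx
    have h2 := hodd 1 (by omega) odd_one
    have h4 : 2 < 2 * m := by
      have : e ≠ 1 := by rintro rfl; exact he odd_one
      have : e ≠ 0 := by omega
      omega
    have h3 := hev 2 h4 two_pos (by decide)
    rw [iterate_one] at h2
    have hfz : f z = r := by
      simp only [mem_uIcc] at *
      clear hodd hev
      grind
    rw [show f^[2] z = f (f z) from rfl, hfz] at h3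
    simp only [mem_uIcc] at *
    clear hodd hev
    grind

/-- An odd period forces all even periods. -/
lemma exists_minimalPeriod_eq_two_mul (H : HasUniqueFixedPoint f b c a) {z : ℝ} (hz : z ∈ Icc b c)
    {d : ℕ} (hd : Odd d) (hzd : f^[d] z = z) (hza : z ≠ a) {m : ℕ} (hm : 0 < m) :
    ∃ x ∈ Icc b c, x ∈ periodicPts f ∧ minimalPeriod f x = 2 * m := by
  obtain ⟨y, hyI, hyn, hstep, halt, hlast⟩ := H.exists_odd_chain hz hd hzd hza hd le_rfl
  have h3 := H.three_le_of_odd hz hd hzd hza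
  have hd1 : d - 1 + 1 = d := by omega
  have h0 : y 0 ∈ uIcc a (f (y (d - 1))) := by
    have := hstep (d - 1) (by omega)
    rwa [hd1, hyn] at this
  have hlt := H.abs_map_sub_lt (hyI (d - 1)) hlast
  have hd1e : Even (d - 1) := by
    rw [← hd1, Nat.odd_add_one, Nat.not_odd_iff_even] at hd; exact hd
  have hpar := sameSide_of_alternating (y := y) (m := d - 1)
    (by rintro h; have := halt 0 (by omega); simp [h] at this) halt
  have hex : ∃ k, Even k ∧ |y (d - 1) - a| ≤ |y k - a| := ⟨d - 1, hd1e, le_rfl⟩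
  classical
  obtain ⟨hke, hk⟩ := Nat.find_spec hex
  have hkle : Nat.find hex ≤ d - 1 := Nat.find_min' hex ⟨hd1e, le_rfl⟩
  have hkmin : ∀ i < Nat.find hex, Even i → |y i - a| < |y (d - 1) - a| := fun i hi he => by
    by_contra! hcon
    exact Nat.find_min hex hi ⟨he, hcon⟩
  generalize Nat.find hex = k at *
  have hk0 : k ≠ 0 := by
    rintro rfl
    exact absurd (hk.trans (abs_sub_le_of_mem_uIcc h0)) (not_le.2 hlt)
  obtain ⟨l, rfl⟩ : ∃ l, k = l + 2 := by
    obtain ⟨l, rfl⟩ := hke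
    exact ⟨l + l - 2, by omega⟩
  have hle : Even l := by simpa [Nat.even_add] using hke
  have hl := hkmin l (by omega) hle
  have hp1 := (hpar l (by omega)).1 hle
  have hp2 := (hpar (l + 2) hkle).1 hke
  have hp3 := (hpar (d - 1) le_rfl).1 hd1e
  have ha1 := halt l (by omega)
  have hs1 := hstep l (by omega)
  have hs2 := hstep (l + 1) (by omega)
  rw [show l + 1 + 1 = l + 2 from rfl] at hs2
  rw [mul_sub_pos_iff_sameSide] at hp1 hp2 hp3
  rw [mul_sub_neg_iff_opposite] at ha1
  clear hpar halt hstep hkmin hex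
  refine H.exists_minimalPeriod_eq_of_horseshoe (hyI (d - 1)) (hyI (l + 1)) (x' := y l)
    ?_ ?_ ?_ ?_ hs1 ?_ hlast hm
  · rw [mem_uIcc]; grind
  · rintro h; rw [h] at hl; exact lt_irrefl _ hl
  · grind
  · rw [mul_sub_neg_iff_opposite]; grind
  · rw [mem_uIcc] at hs2 ⊢; grind

end HasUniqueFixedPoint

namespace HasUniqueFixedPoint

variable {f g : ℝ → ℝ} {i1 i2 j1 j2 a : ℝ}

/-- If `f` is more repellent than `g`, then near the fixed point `f` swaps or preserves the sides
whenever `g` does. -/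
lemma swaps_or_preserves_sides_of_more_repellent (Hg : HasUniqueFixedPoint g i1 i2 a)
    (hgerm : (∀ u ∈ Icc i1 i2, u ≠ a → ∃ w ∈ uIcc a u, (g w - a) * (w - a) < 0) ∨
      (∀ u ∈ Icc i1 i2, u ≠ a → ∃ w ∈ uIcc a u, 0 < (g w - a) * (w - a)))
    (hrep : ∀ x ∈ Icc i1 i2, ∃ y ∈ uIcc x a, g y = g x ∧ uIcc (g y) a ⊆ uIcc (f y) a) :
    (∀ u ∈ Icc i1 i2, u ≠ a → ∃ w ∈ uIcc a u, (f w - a) * (w - a) < 0) ∨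
      (∀ u ∈ Icc i1 i2, u ≠ a → ∃ w ∈ uIcc a u, 0 < (f w - a) * (w - a)) := by
  have key : ∀ u ∈ Icc i1 i2, ∀ w ∈ uIcc a u, g w ≠ a → ∃ y ∈ uIcc a u, y ≠ a ∧
      y ∈ uIcc w a ∧ g w ∈ uIcc (f y) a := fun u hu w hw hgw => by
    obtain ⟨y, hy, hgy, hsub⟩ := hrep w (Hg.uIcc_subset hu hw)
    refine ⟨y, uIcc_subset_uIcc hw left_mem_uIcc hy, ?_, hy, hgy ▸ hsub left_mem_uIcc⟩
    rintro rfl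
    exact hgw (hgy ▸ Hg.fixed)
  refine hgerm.imp (fun h u hu hua => ?_) (fun h u hu hua => ?_)
  · obtain ⟨w, hw, hs⟩ := h u hu hua
    rw [mul_sub_neg_iff_opposite] at hs
    obtain ⟨y, hy, hya, hyw, hgy⟩ := key u hu w hw (by grind)
    refine ⟨y, hy, mul_sub_neg_iff_opposite.2 ?_⟩
    rw [mem_uIcc] at hyw hgy
    grind
  · obtain ⟨w, hw, hs⟩ := h u hu hua
    rw [mul_sub_pos_iff_sameSide] at hs
    obtain ⟨y, hy, hya, hyw, hgy⟩ := key u hu w hw (by grind)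
    refine ⟨y, hy, mul_sub_pos_iff_sameSide.2 ?_⟩
    rw [mem_uIcc] at hyw hgy
    grind

lemma overRotNum_eq_half_of_alternating (Hg : HasUniqueFixedPoint g i1 i2 a) {x : ℝ}
    (hx : x ∈ Icc i1 i2) {n : ℕ} (hn : 0 < n) (hxn : g^[n] x = x) (hxa : x ≠ a)
    (halt : ∀ i, (g^[i] x - a) * (g^[i + 1] x - a) < 0) : overRotNum g x = 1 / 2 := by
  refine overRotNum_eq_half hn hxn fun i _ => ?_
  have h1 := Hg.iterate_ne hn hxn hxa
  have h2 := halt i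
  have h3 := h1 (i + 1)
  rw [iterate_succ_apply'] at h2 h3
  rw [Hg.chi_eq (Hg.maps.iterate i hx) (h1 i) h3, if_pos h2]

end HasUniqueFixedPoint

lemma overRotNum_eq_half_of_iterate_two {f : ℝ → ℝ} {z : ℝ} (hz : f^[2] z = z) :
    overRotNum f z = 1 / 2 := by
  refine overRotNum_eq_half two_pos hz fun i _ => ?_
  have h : f (f (f^[i] z)) = f^[i] z := by
    rw [← iterate_succ_apply' f i z, ← iterate_succ_apply' f (i + 1) z,
      show (i + 1).succ = i + 2 from rfl, iterate_add_apply, hz]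
  rw [chi, h, if_pos]
  nlinarith [sq_nonneg (f (f^[i] z) - f^[i] z)]

lemma not_alternating_of_odd {g : ℝ → ℝ} {x a : ℝ} {n : ℕ} (hn : Odd n) (hxn : g^[n] x = x) :
    ¬ ∀ i, (g^[i] x - a) * (g^[i + 1] x - a) < 0 := fun halt => by
  have h0 : g^[0] x ≠ a := by
    intro h
    have := halt 0
    simp [h] at this
  have h1 := (sameSide_of_alternating (y := fun i => g^[i] x) h0 (fun i _ => halt i) n le_rfl).2
    (Nat.not_even_iff_odd.2 hn)
  simp only [hxn, iterate_zero, id] at h1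
  exact absurd h1 (not_lt.2 (mul_self_nonneg _))

theorem stmt7 (i1 i2 j1 j2 a : ℝ) (g f : ℝ → ℝ)
    (hi : i1 ≤ i2) (hj : j1 ≤ j2) (hIJ : Set.Icc i1 i2 ⊆ Set.Icc j1 j2)
    (hgc : ContinuousOn g (Set.Icc i1 i2)) (hgm : Set.MapsTo g (Set.Icc i1 i2) (Set.Icc i1 i2))
    (hgpm : PiecewiseMonotoneOn g i1 i2)
    (hfc : ContinuousOn f (Set.Icc j1 j2)) (hfm : Set.MapsTo f (Set.Icc j1 j2) (Set.Icc j1 j2))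
    (hfpm : PiecewiseMonotoneOn f j1 j2)
    (ha : a ∈ Set.Icc i1 i2)
    (hga : g a = a) (hguniq : ∀ x ∈ Set.Icc i1 i2, g x = x → x = a)
    (hfa : f a = a) (hfuniq : ∀ x ∈ Set.Icc j1 j2, f x = x → x = a)
    (hnotmax : ¬ IsLocalMaxOn g (Set.Icc i1 i2) a)
    (hnotmin : ¬ IsLocalMinOn g (Set.Icc i1 i2) a)
    -- f is more repellent from a than g on B = ψ_g(I): for every x ∈ I and every point y of
    -- the interval with endpoints x and a closest to a with g(y) = g(x), the interval with
    -- endpoints f(y) and a contains the interval with endpoints g(y) and a.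
    (hrep : ∀ x ∈ Set.Icc i1 i2, ∀ y ∈ Set.uIcc x a, g y = g x →
      (∀ z ∈ Set.uIcc x a, g z = g x → |y - a| ≤ |z - a|) →
      Set.uIcc (g y) a ⊆ Set.uIcc (f y) a) :
    overRotInterval g (Set.Icc i1 i2) ⊆ overRotInterval f (Set.Icc j1 j2) ∧
    ((∃ y ∈ Set.Icc i1 i2, y ∈ Function.periodicPts g ∧ Odd (Function.minimalPeriod g y) ∧
        1 < Function.minimalPeriod g y) →
      {n : ℕ | ∃ x ∈ Set.Icc i1 i2, x ∈ Function.periodicPts g ∧ Function.minimalPeriod g x = n}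
        ⊆
      {n : ℕ | ∃ x ∈ Set.Icc j1 j2, x ∈ Function.periodicPts f ∧
        Function.minimalPeriod f x = n}) := by
  have Hg : HasUniqueFixedPoint g i1 i2 a := ⟨hgc, hgm, ha, hga, hguniq⟩
  have Hf : HasUniqueFixedPoint f j1 j2 a := ⟨hfc, hfm, hIJ ha, hfa, hfuniq⟩
  have hrep' : ∀ x ∈ Icc i1 i2, ∃ y ∈ uIcc x a, g y = g x ∧ uIcc (g y) a ⊆ uIcc (f y) a :=
    fun x hx => by
      obtain ⟨y, hy, hgy, hclosest⟩ :=
        exists_closest (hgc.mono (uIcc_comm a x ▸ Hg.uIcc_subset hx))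
      exact ⟨y, hy, hgy, hrep x hx y hy hgy hclosest⟩
  have hgerm := Hg.swaps_or_preserves_sides_of_more_repellent
    (hgpm.swaps_or_preserves_sides ha hga hnotmax hnotmin) hrep'
  have shadow : ∀ x ∈ Icc i1 i2, ∀ n, 0 < n → g^[n] x = x → x ≠ a →
      (∃ z ∈ Icc j1 j2, f^[n] z = z ∧ ∀ i ≤ n, 0 < (f^[i] z - a) * (g^[i] x - a)) ∨
      ((∀ i, (g^[i] x - a) * (g^[i + 1] x - a) < 0) ∧ ∃ z ∈ Icc j1 j2, z ≠ a ∧ f^[2] z = z) :=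
    fun x hx n hn hxn hxa => Hg.exists_same_itinerary Hf hIJ hgerm hrep' hx hn hxn hxa
  have shadow_ne : ∀ {x z : ℝ} {n : ℕ},
      (∀ i ≤ n, 0 < (f^[i] z - a) * (g^[i] x - a)) → z ≠ a := fun h => by
    rintro rfl
    have := h 0 (Nat.zero_le _)
    simp at this
  have shadow_odd : ∀ x ∈ Icc i1 i2, ∀ n, Odd n → g^[n] x = x → x ≠ a →
      ∃ z ∈ Icc j1 j2, f^[n] z = z ∧ z ≠ a := fun x hx n hn hxn hxa => by
    rcases shadow x hx n hn.pos hxn hxa with ⟨z, hz, hzn, hside⟩ | ⟨halt, -⟩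
    · exact ⟨z, hz, hzn, shadow_ne hside⟩
    · exact absurd halt (not_alternating_of_odd hn hxn)
  have ne_of_period : ∀ x, 1 < minimalPeriod g x → x ≠ a := by
    rintro x hx rfl
    rw [minimalPeriod_eq_one_iff_isFixedPt.2 hga] at hx
    exact lt_irrefl _ hx
  constructor
  · refine closure_mono ?_
    rintro r ⟨x, hx, hxper, hgx, rfl⟩
    have hn := minimalPeriod_pos_of_mem_periodicPts hxper
    have hxn : g^[minimalPeriod g x] x = x := iterate_minimalPeriod
    have hxa : x ≠ a := by rintro rfl; exact hgx hga
    rcases shadow x hx _ hn hxn hxa with ⟨z, hz, hzn, hside⟩ | ⟨halt, z, hz, hza, hz2⟩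
    · exact ⟨z, hz, mk_mem_periodicPts hn hzn, fun h => shadow_ne hside (hfuniq z hz h),
        Hg.overRotNum_eq_of_same_itinerary Hf hx hz hn hxn hzn hside⟩
    · refine ⟨z, hz, mk_mem_periodicPts two_pos hz2, fun h => hza (hfuniq z hz h), ?_⟩
      rw [overRotNum_eq_half_of_iterate_two hz2,
        Hg.overRotNum_eq_half_of_alternating hx hn hxn hxa halt]
  · rintro ⟨y, hy, -, hyodd, hy1⟩ n ⟨x, hx, hxper, rfl⟩
    have hn := minimalPeriod_pos_of_mem_periodicPts hxper
    rcases Nat.even_or_odd (minimalPeriod g x) with hev | hodd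
    · obtain ⟨z, hz, hzn, hza⟩ := shadow_odd y hy _ hyodd iterate_minimalPeriod (ne_of_period y hy1)
      obtain ⟨m, hm⟩ := hev
      obtain ⟨t, ht, htper, htm⟩ := Hf.exists_minimalPeriod_eq_two_mul hz hyodd hzn hza
        (m := m) (by omega)
      exact ⟨t, ht, htper, by omega⟩
    · rcases Nat.lt_or_ge 1 (minimalPeriod g x) with h1 | h1
      · obtain ⟨z, hz, hzn, hza⟩ :=
          shadow_odd x hx _ hodd iterate_minimalPeriod (ne_of_period x h1)
        exact Hf.exists_minimalPeriod_eq_of_odd hz hodd hzn hza hodd le_rfl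
      · refine ⟨a, hIJ ha, mk_mem_periodicPts one_pos hfa, ?_⟩
        rw [minimalPeriod_eq_one_iff_isFixedPt.2 hfa]
        omega
end
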